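/- Let X be the punctured Möbius band with boundary circles C₁ and C₂. If f : X → X is a boundary-preserving map such that both restrictions f|C₁ : C₁ → ∂X and f|C₂ : C₂ → ∂X are inessential, then f is boundary-homotopic to a map g : X → X whose fixed point set {x ∈ X : g(x) = x} has at most two elements. -/

import Mathlib

open Set

namespace PMB

/-- The square [0,1] × [−1,1] as a subspace of ℝ². -/
def Sq : Set (ℝ × ℝ) := Set.Icc 0 1 ×ˢ Set.Icc (-1) 1

/-- The identification (0,y) ∼ (1,−y) on the square. -/
def rel (p q : Sq) : Prop :=
  (p : ℝ × ℝ) = (q : ℝ × ℝ) ∨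
  ((p : ℝ × ℝ).1 = 0 ∧ (q : ℝ × ℝ).1 = 1 ∧ (p : ℝ × ℝ).2 = -(q : ℝ × ℝ).2) ∨
  ((p : ℝ × ℝ).1 = 1 ∧ (q : ℝ × ℝ).1 = 0 ∧ (q : ℝ × ℝ).2 = -(p : ℝ × ℝ).2)

/-- The Möbius band: the quotient of the square by the identification. -/
def M := Quot rel

instance : TopologicalSpace M := inferInstanceAs (TopologicalSpace (Quot rel))

/-- The quotient map. -/
def qm : Sq → M := Quot.mk rel

/-- The open disc of radius 1/4 centred at (1/2, 0). -/
def Bdisc : Set (ℝ × ℝ) := Metric.ball (1/2, 0) (1/4)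

/-- The circle of radius 1/4 centred at (1/2, 0). -/
def Scirc : Set (ℝ × ℝ) := Metric.sphere (1/2, 0) (1/4)

/-- The punctured Möbius band, as a subset of the Möbius band. -/
def Xset : Set M := {m | m ∉ qm '' {p : Sq | (p : ℝ × ℝ) ∈ Bdisc}}

/-- The punctured Möbius band as a topological space. -/
abbrev X : Type := ↥Xset

/-- The boundary circle of the Möbius band. -/
def C1 : Set X := {x | ∃ p : Sq, qm p = (x : M) ∧ ((p : ℝ × ℝ).2 = 1 ∨ (p : ℝ × ℝ).2 = -1)}

/-- The boundary circle coming from the removed disc. -/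
def C2 : Set X := {x | ∃ p : Sq, qm p = (x : M) ∧ (p : ℝ × ℝ) ∈ Scirc}

/-- The boundary of the punctured Möbius band. -/
def Bd : Set X := C1 ∪ C2

/-- A self-map of the punctured Möbius band is boundary-preserving if it sends ∂X into ∂X. -/
def BoundaryPreserving (f : C(X, X)) : Prop := MapsTo f Bd Bd

/-- Two self-maps are boundary-homotopic if there is a homotopy between them keeping
∂X inside ∂X at all times. -/
def BoundaryHomotopic (f g : C(X, X)) : Prop :=
  ∃ H : ContinuousMap.Homotopy f g, ∀ x : X, x ∈ Bd → ∀ t : unitInterval, H (t, x) ∈ Bd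

/-- A continuous map is inessential if it is homotopic to a constant map. -/
def Inessential {α β : Type*} [TopologicalSpace α] [TopologicalSpace β] (f : C(α, β)) : Prop :=
  ∃ b : β, ContinuousMap.Homotopic f (ContinuousMap.const α b)

/-- A continuous map is essential if it is not homotopic to a constant map. -/
def Essential {α β : Type*} [TopologicalSpace α] [TopologicalSpace β] (f : C(α, β)) : Prop :=
  ¬ Inessential f

/-- The restriction of a self-map of X to a subset `s` mapped into a subset `t`,
as a continuous map between the subspaces. -/
def restrictMap (f : C(X, X)) {s t : Set X} (h : MapsTo f s t) : C(s, t) :=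
  ⟨fun x => ⟨f x, h x.2⟩, Continuous.subtype_mk (f.continuous.comp continuous_subtype_val) _⟩

/-!
Since `f` is inessential on both boundary circles, it can be made constant near each of them. Up to
homotopy it then factors through the figure eight, onto which `X` retracts. Filling in the removed
disc and collapsing the boundary circle of the Möbius band turns `X` into the projective plane,
whose fundamental group has order two, whereas that of the figure eight is free. Hence the map to
the figure eight lifts to the universal cover, a tree, and a contraction of the tree deforms `f` to
a constant through maps that are constant near each boundary circle. Performing this deformation
only away from the boundary makes `f` factor through a path `γ`, as `x ↦ γ (radius x)`. The path
can be reparametrized and pushed away from `C2` so that `radius (γ t) = t` for at most two `t`,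
which leaves at most two fixed points.
-/

section FreeGroup

variable {α : Type*}

open FreeGroup

lemma mk_singleton_true (i : α) : mk [(i, true)] = of i := rfl

lemma mk_singleton_false (i : α) : mk [(i, false)] = (of i)⁻¹ := by simp [of, inv_mk, invRev]

variable [DecidableEq α]

lemma toWord_mk_mul (x : α × Bool) (u : FreeGroup α) :
    (mk [x] * u).toWord = x :: u.toWord ∨ u.toWord = (x.1, !x.2) :: (mk [x] * u).toWord := by
  rw [toWord_mul, toWord_mk, reduce_singleton, List.singleton_append, reduce.cons, reduce_toWord]
  rcases u.toWord with _ | ⟨y, L⟩ <;> grind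

lemma toWord_mul_mk (u : FreeGroup α) (x : α × Bool) :
    (u * mk [x]).toWord = u.toWord ++ [x] ∨ u.toWord = (u * mk [x]).toWord ++ [(x.1, !x.2)] := by
  have h := toWord_mk_mul (x.1, !x.2) u⁻¹
  have hinv : mk [(x.1, !x.2)] * u⁻¹ = (u * mk [x])⁻¹ := by simp [inv_mk, invRev]
  rw [hinv, toWord_inv, toWord_inv] at h
  refine h.imp (fun h => ?_) fun h => ?_ <;>
    simpa [-Bool.not_eq_eq_eq_not, invRev, Function.comp_def] using congrArg invRev h

/-- Induction along the geodesics of the Cayley graph issuing from the identity. -/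
lemma geodesic_induction {P : FreeGroup α → Prop} (one : P 1)
    (forward : ∀ v i, v.norm < (v * of i).norm → P v → P (v * of i))
    (backward : ∀ v i, (v * of i).norm < v.norm → P (v * of i) → P v) (u : FreeGroup α) : P u := by
  suffices H : ∀ L : List (α × Bool), IsReduced L → P (mk L) from
    mk_toWord (x := u) ▸ H _ isReduced_toWord
  intro L
  induction L using List.reverseRecOn with
  | nil => exact fun _ => one
  | append_singleton L x ih =>
    intro hred
    have hL : IsReduced L := (List.isChain_append.mp hred).1
    have hnorm : (mk L).norm < (mk (L ++ [x])).norm := by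
      simp [FreeGroup.norm, toWord_mk, hL.reduce_eq, hred.reduce_eq]
    rw [← mul_mk] at hnorm ⊢
    obtain ⟨i, _ | _⟩ := x
    · have hmul : mk L * mk [(i, false)] * of i = mk L := by simp [mk_singleton_false]
      exact backward _ i (by rwa [hmul]) (by rw [hmul]; exact ih hL)
    · exact forward _ i hnorm (ih hL)

lemma mul_of_mem_startsWith_iff {u : FreeGroup α} {i j : α} (h : u = 1 → i ≠ j) :
    u * of i ∈ startsWith (j, true) ↔ u ∈ startsWith (j, true) := by
  rw [← toWord_eq_nil_iff] at h
  simp only [startsWith, mem_ofPred_eq]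
  rcases toWord_mul_mk u (i, true) with hw | hw <;> rw [mk_singleton_true] at hw <;> grind

lemma of_mul_notMem_startsWith {u : FreeGroup α} {i : α} (h : u ∈ startsWith (i, false)) :
    of i * u ∉ startsWith (i, true) := by
  have hu : IsReduced u.toWord := isReduced_toWord
  have hiu : IsReduced (of i * u).toWord := isReduced_toWord
  simp only [startsWith, mem_ofPred_eq] at h ⊢
  rcases hL : u.toWord with _ | ⟨y, L⟩
  · simp [hL] at h
  · rcases toWord_mk_mul (i, true) u with hw | hw <;> rw [mk_singleton_true, hL] at hw
    · grind [isReduced_cons_cons]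
    · rcases L with _ | ⟨z, L⟩ <;> grind [isReduced_cons_cons]

end FreeGroup

section CayleyTree

variable {α : Type*} [DecidableEq α]

open FreeGroup

/-- The coordinate of the vertex `w` of the Cayley tree of `FreeGroup α` at the edge `e = (g, i)`
from `g` to `g * of i`: it is `1` if `w` lies on the far side of that edge and `0` otherwise. -/
noncomputable def vertexCoord (w : FreeGroup α) (e : FreeGroup α × α) : ℝ :=
  (startsWith (e.2, true)).indicator 1 (e.1⁻¹ * w)

/-- The coordinates of the point at parameter `h` on the edge from `w` to `w * of i`. -/
noncomputable def edgeCoord (w : FreeGroup α) (i : α) (h : ℝ) : FreeGroup α × α → ℝ :=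
  Function.update (vertexCoord w) (w, i) h

variable (α) in
/-- The geometric realization of the Cayley tree of `FreeGroup α`, as a subspace of the space of
real functions on its edges. -/
def CayleyTree : Type _ :=
  {x : FreeGroup α × α → ℝ // ∃ w i, ∃ h ∈ unitInterval, edgeCoord w i h = x}

lemma vertexCoord_start (w : FreeGroup α) (i : α) : vertexCoord w (w, i) = 0 := by
  simp [vertexCoord, startsWith]

lemma vertexCoord_end (w : FreeGroup α) (i : α) : vertexCoord (w * of i) (w, i) = 1 := by
  simp [vertexCoord, startsWith]

lemma vertexCoord_eq_zero_or_one (w : FreeGroup α) (e : FreeGroup α × α) :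
    vertexCoord w e = 0 ∨ vertexCoord w e = 1 := by
  classical
  simp only [vertexCoord, indicator_apply]
  split_ifs <;> simp

lemma vertexCoord_mem_unitInterval (w : FreeGroup α) (e : FreeGroup α × α) :
    vertexCoord w e ∈ unitInterval := by
  rcases vertexCoord_eq_zero_or_one w e with h | h <;> simp [h]

lemma vertexCoord_mul_of {w : FreeGroup α} {i : α} {e : FreeGroup α × α} (he : e ≠ (w, i)) :
    vertexCoord (w * of i) e = vertexCoord w e := by
  classical
  obtain ⟨g, j⟩ := e
  have hij : g⁻¹ * w = 1 → i ≠ j := by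
    rw [inv_mul_eq_one]
    rintro rfl rfl
    exact he rfl
  simp only [vertexCoord, indicator_apply, ← mul_assoc, mul_of_mem_startsWith_iff hij,
    Pi.one_apply]

lemma exists_vertexCoord_separates {v w : FreeGroup α} (h : v ≠ w) :
    ∃ i, vertexCoord v (w, i) = 1 ∨ vertexCoord v (w * (of i)⁻¹, i) = 0 := by
  rcases hL : (w⁻¹ * v).toWord with _ | ⟨⟨i, _ | _⟩, L⟩
  · exact absurd (inv_mul_eq_one.mp (toWord_eq_nil_iff.mp hL)).symm h
  · refine ⟨i, .inr (indicator_of_notMem ?_ _)⟩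
    simpa [mul_assoc] using of_mul_notMem_startsWith (u := w⁻¹ * v) (by simp [startsWith, hL])
  · exact ⟨i, .inl (by simp [vertexCoord, startsWith, hL])⟩

lemma vertexCoord_mul (g w : FreeGroup α) (e : FreeGroup α × α) :
    vertexCoord (g * w) e = vertexCoord w (g⁻¹ * e.1, e.2) := by
  simp only [vertexCoord, mul_inv_rev, inv_inv, mul_assoc]

@[simp]
lemma edgeCoord_self (w : FreeGroup α) (i : α) (h : ℝ) : edgeCoord w i h (w, i) = h := by
  simp [edgeCoord]

lemma edgeCoord_of_ne {w : FreeGroup α} {i : α} {e : FreeGroup α × α} (he : e ≠ (w, i)) (h : ℝ) :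
    edgeCoord w i h e = vertexCoord w e := by
  simp [edgeCoord, he]

lemma edgeCoord_zero (w : FreeGroup α) (i : α) : edgeCoord w i 0 = vertexCoord w := by
  rw [edgeCoord, ← vertexCoord_start w i, Function.update_eq_self]

lemma edgeCoord_one (w : FreeGroup α) (i : α) : edgeCoord w i 1 = vertexCoord (w * of i) := by
  funext e
  obtain rfl | he := eq_or_ne e (w, i)
  · rw [edgeCoord_self, vertexCoord_end]
  · rw [edgeCoord_of_ne he, vertexCoord_mul_of he]

lemma edgeCoord_mul (g w : FreeGroup α) (i : α) (h : ℝ) (e : FreeGroup α × α) :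
    edgeCoord (g * w) i h e = edgeCoord w i h (g⁻¹ * e.1, e.2) := by
  obtain rfl | he := eq_or_ne e (g * w, i)
  · simp
  · have he' : (g⁻¹ * e.1, e.2) ≠ (w, i) := by
      rintro ⟨⟩
      simp at he
    rw [edgeCoord_of_ne he, edgeCoord_of_ne he', vertexCoord_mul]

namespace CayleyTree

instance : CoeFun (CayleyTree α) fun _ => FreeGroup α × α → ℝ := ⟨Subtype.val⟩

instance : TopologicalSpace (CayleyTree α) := instTopologicalSpaceSubtype

@[ext]
lemma ext {x y : CayleyTree α} (h : ∀ e, x e = y e) : x = y := Subtype.ext (funext h)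

@[fun_prop]
lemma continuous_coord (e : FreeGroup α × α) : Continuous fun x : CayleyTree α => x e :=
  (continuous_apply e).comp continuous_subtype_val

/-- The point at parameter `h` on the edge from `w` to `w * of i`. -/
noncomputable def edge (w : FreeGroup α) (i : α) (h : unitInterval) : CayleyTree α :=
  ⟨edgeCoord w i h, w, i, h, h.2, rfl⟩

@[simp]
lemma edge_apply (w : FreeGroup α) (i : α) (h : unitInterval) (e : FreeGroup α × α) :
    edge w i h e = edgeCoord w i h e := rfl

lemma exists_edge (x : CayleyTree α) : ∃ w i h, edge w i h = x :=
  let ⟨_, w, i, h, hh, hx⟩ := x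
  ⟨w, i, ⟨h, hh⟩, Subtype.ext hx⟩

lemma continuous_edge (w : FreeGroup α) (i : α) : Continuous (edge w i) :=
  continuous_induced_rng.mpr (continuous_const.update _ continuous_subtype_val)

lemma coord_mem_unitInterval (x : CayleyTree α) (e : FreeGroup α × α) : x e ∈ unitInterval := by
  obtain ⟨w, i, h, rfl⟩ := exists_edge x
  obtain rfl | he := eq_or_ne e (w, i)
  · rw [edge_apply, edgeCoord_self]; exact h.2
  · simpa [edgeCoord_of_ne he] using vertexCoord_mem_unitInterval w e

lemma edge_eq_zero_or_one_of_ne {w : FreeGroup α} {i : α} {e : FreeGroup α × α}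
    (he : e ≠ (w, i)) (h : unitInterval) : edge w i h e = 0 ∨ edge w i h e = 1 := by
  simpa [edgeCoord_of_ne he] using vertexCoord_eq_zero_or_one w e

lemma edge_eq_edge {v w : FreeGroup α} {i j : α} {h h' : unitInterval}
    (hx : edge v i h = edge w j h') : i = j ∧ h = h' ∨ (h = 0 ∨ h = 1) ∧ (h' = 0 ∨ h' = 1) := by
  by_cases hne : (v, i) = (w, j)
  · cases hne
    exact .inl ⟨rfl, Subtype.ext (by simpa using congrArg (· (v, i)) hx)⟩
  · refine .inr ⟨?_, ?_⟩
    · have := edge_eq_zero_or_one_of_ne hne h'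
      rw [← hx, edge_apply, edgeCoord_self] at this
      simpa only [Icc.coe_eq_zero, Icc.coe_eq_one] using this
    · have := edge_eq_zero_or_one_of_ne (Ne.symm hne) h
      rw [hx, edge_apply, edgeCoord_self] at this
      simpa only [Icc.coe_eq_zero, Icc.coe_eq_one] using this

lemma exists_vertex_near (w : FreeGroup α) (i : α) (h : unitInterval) :
    ∃ v, (v = w ∨ v = w * of i) ∧ ∀ e, |edge w i h e - vertexCoord v e| ≤ 1 / 2 := by
  have h0 := h.2.1
  have h1 := h.2.2
  rcases le_total (h : ℝ) (1 / 2) with hh | hh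
  · refine ⟨w, .inl rfl, fun e => ?_⟩
    obtain rfl | he := eq_or_ne e (w, i)
    · simpa [vertexCoord_start, abs_of_nonneg h0] using hh
    · simp [edgeCoord_of_ne he]
  · refine ⟨w * of i, .inr rfl, fun e => ?_⟩
    obtain rfl | he := eq_or_ne e (w, i)
    · rw [edge_apply, edgeCoord_self, vertexCoord_end, abs_le]
      constructor <;> linarith
    · simp [edgeCoord_of_ne he, vertexCoord_mul_of he]

/-- The open star of radius `1 / 2` around the vertex `v`. -/
def halfStar (v : FreeGroup α) : Set (CayleyTree α) :=
  {x | ∀ i, x (v, i) < 1 / 2 ∧ 1 / 2 < x (v * (of i)⁻¹, i)}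

lemma isOpen_halfStar [Finite α] (v : FreeGroup α) : IsOpen (halfStar v) := by
  simp only [halfStar, ofPred_forall, ofPred_and]
  exact isOpen_iInter_of_finite fun i => (isOpen_lt (by fun_prop) continuous_const).inter
    (isOpen_lt continuous_const (by fun_prop))

lemma mem_halfStar_of_coord_eq {x : CayleyTree α} {v : FreeGroup α}
    (hx : ∀ e, x e = vertexCoord v e) : x ∈ halfStar v := by
  intro i
  have hback : vertexCoord v (v * (of i)⁻¹, i) = 1 := by
    simpa using vertexCoord_end (v * (of i)⁻¹) i
  rw [hx, hx, vertexCoord_start, hback]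
  norm_num

lemma eq_of_mem_halfStar {x : CayleyTree α} {u v : FreeGroup α} (hx : x ∈ halfStar v)
    (hu : ∀ e, |x e - vertexCoord u e| ≤ 1 / 2) : u = v := by
  by_contra huv
  obtain ⟨i, hi | hi⟩ := exists_vertexCoord_separates huv
  · have := abs_le.mp (hu (v, i))
    linarith [(hx i).1]
  · have := abs_le.mp (hu (v * (of i)⁻¹, i))
    linarith [(hx i).2]

lemma halfStar_center_unique {x : CayleyTree α} {u v : FreeGroup α} (hu : x ∈ halfStar u)
    (hv : x ∈ halfStar v) : u = v := by
  obtain ⟨w, i, h, rfl⟩ := exists_edge x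
  obtain ⟨c, -, hc⟩ := exists_vertex_near w i h
  exact (eq_of_mem_halfStar hu hc).symm.trans (eq_of_mem_halfStar hv hc)

/-- The edge from `w` to `w * of i` without its end points. -/
def openEdge (w : FreeGroup α) (i : α) : Set (CayleyTree α) := {x | x (w, i) ∈ Ioo 0 1}

lemma isOpen_openEdge (w : FreeGroup α) (i : α) : IsOpen (openEdge w i) :=
  isOpen_Ioo.preimage (continuous_coord _)

lemma eq_of_edge_mem_openEdge {v w : FreeGroup α} {i j : α} {h : unitInterval}
    (hx : edge w i h ∈ openEdge v j) : v = w ∧ j = i := by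
  rw [← Prod.mk.injEq]
  by_contra hne
  have hpos : 0 < edge w i h (v, j) ∧ edge w i h (v, j) < 1 := hx
  rcases edge_eq_zero_or_one_of_ne hne h with h | h <;> rw [h] at hpos <;> norm_num at hpos

lemma mem_halfStar_or_mem_openEdge (x : CayleyTree α) :
    (∃ v, x ∈ halfStar v) ∨ ∃ w i, x ∈ openEdge w i := by
  obtain ⟨w, i, h, rfl⟩ := exists_edge x
  rcases eq_or_lt_of_le h.2.1 with h0 | h0
  · exact .inl ⟨w, mem_halfStar_of_coord_eq fun e => by rw [edge_apply, ← h0, edgeCoord_zero]⟩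
  rcases eq_or_lt_of_le h.2.2 with h1 | h1
  · exact .inl ⟨w * of i, mem_halfStar_of_coord_eq fun e => by rw [edge_apply, h1, edgeCoord_one]⟩
  · exact .inr ⟨w, i, by simpa [openEdge] using ⟨h0, h1⟩⟩

lemma isClosed_range_edge (w : FreeGroup α) (i : α) : IsClosed (range (edge w i)) :=
  have : T2Space (CayleyTree α) := inferInstanceAs (T2Space (Subtype _))
  (isCompact_range (continuous_edge w i)).isClosed

lemma locallyFinite_edges [Finite α] :
    LocallyFinite fun e : FreeGroup α × α => range (edge e.1 e.2) := by
  intro x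
  rcases mem_halfStar_or_mem_openEdge x with ⟨v, hv⟩ | ⟨w, i, hwi⟩
  · refine ⟨halfStar v, (isOpen_halfStar v).mem_nhds hv,
      ((finite_range fun i => (v, i)).union (finite_range fun i => (v * (of i)⁻¹, i))).subset ?_⟩
    rintro ⟨w, i⟩ ⟨_, ⟨h, rfl⟩, hy⟩
    obtain ⟨u, hu, hnear⟩ := exists_vertex_near w i h
    obtain rfl := eq_of_mem_halfStar hy hnear
    rcases hu with rfl | rfl
    · exact .inl ⟨i, rfl⟩
    · exact .inr ⟨i, by simp⟩
  · refine ⟨openEdge w i, (isOpen_openEdge w i).mem_nhds hwi, (finite_singleton (w, i)).subset ?_⟩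
    rintro ⟨v, j⟩ ⟨_, ⟨h, rfl⟩, hy⟩
    obtain ⟨rfl, rfl⟩ := eq_of_edge_mem_openEdge hy
    rfl

lemma continuous_of_comp_edge [Finite α] {Z : Type*} [TopologicalSpace Z] {f : CayleyTree α → Z}
    (hf : ∀ w i, Continuous (f ∘ edge w i)) : Continuous f := by
  refine locallyFinite_edges.continuous ?_ (fun e => isClosed_range_edge e.1 e.2) fun ⟨w, i⟩ => ?_
  · exact eq_univ_of_forall fun x =>
      let ⟨w, i, h, hx⟩ := exists_edge x
      mem_iUnion.mpr ⟨(w, i), h, hx⟩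
  · have hproj : Continuous fun x : CayleyTree α => projIcc (0 : ℝ) 1 zero_le_one (x (w, i)) :=
      continuous_projIcc.comp (continuous_coord _)
    refine ((hf w i).comp hproj).continuousOn.congr ?_
    rintro _ ⟨h, rfl⟩
    simp

instance : MulAction (FreeGroup α) (CayleyTree α) where
  smul g x := ⟨fun e => x (g⁻¹ * e.1, e.2), by
    obtain ⟨w, i, h, rfl⟩ := exists_edge x
    exact ⟨g * w, i, h, h.2, funext fun e => edgeCoord_mul g w i h e⟩⟩
  one_smul x := ext fun e => by change x _ = _; simp
  mul_smul g h x := ext fun e => by change x _ = x _; simp [mul_assoc]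

lemma smul_apply (g : FreeGroup α) (x : CayleyTree α) (e : FreeGroup α × α) :
    (g • x) e = x (g⁻¹ * e.1, e.2) := rfl

lemma smul_edge (g w : FreeGroup α) (i : α) (h : unitInterval) :
    g • edge w i h = edge (g * w) i h := by
  ext e
  rw [smul_apply, edge_apply, edge_apply, edgeCoord_mul]

lemma smul_mem_halfStar {g v : FreeGroup α} {x : CayleyTree α} (hx : x ∈ halfStar v) :
    g • x ∈ halfStar (g * v) := fun i => by
  simpa [smul_apply, mul_assoc] using hx i

lemma exists_nhds_disjoint_smul [Finite α] (x : CayleyTree α) :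
    ∃ U ∈ nhds x, ∀ g : FreeGroup α, ((g • ·) '' U ∩ U).Nonempty → g = 1 := by
  rcases mem_halfStar_or_mem_openEdge x with ⟨v, hv⟩ | ⟨w, i, hwi⟩
  · refine ⟨halfStar v, (isOpen_halfStar v).mem_nhds hv, ?_⟩
    rintro g ⟨_, ⟨y, hy, rfl⟩, hgy⟩
    simpa using halfStar_center_unique (smul_mem_halfStar (g := g) hy) hgy
  · refine ⟨openEdge w i, (isOpen_openEdge w i).mem_nhds hwi, ?_⟩
    rintro g ⟨_, ⟨y, hy, rfl⟩, hgy⟩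
    obtain ⟨v, j, h, rfl⟩ := exists_edge y
    obtain ⟨rfl, rfl⟩ := eq_of_edge_mem_openEdge hy
    simp only [smul_edge] at hgy
    simpa using (eq_of_edge_mem_openEdge hgy).1

end CayleyTree

variable (α) in
/-- The rose with petals indexed by `α`: the quotient of the Cayley tree by the free group. -/
abbrev Rose : Type _ := MulAction.orbitRel.Quotient (FreeGroup α) (CayleyTree α)

namespace Rose

open CayleyTree

variable (α) in
/-- The universal covering of the rose. -/
def proj : CayleyTree α → Rose α := Quotient.mk _

variable (α) in
lemma isQuotientCoveringMap_proj [Finite α] :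
    IsQuotientCoveringMap (proj α) (FreeGroup α) where
  toIsQuotientMap := isQuotientMap_quotient_mk'
  continuous_const_smul _ := (continuous_pi fun _ => continuous_coord _).subtype_mk _
  apply_eq_iff_mem_orbit := Quotient.eq
  disjoint := exists_nhds_disjoint_smul

/-- The point at parameter `h` of the petal `i`. -/
noncomputable def petal (i : α) (h : unitInterval) : Rose α := proj α (edge 1 i h)

lemma proj_edge (w : FreeGroup α) (i : α) (h : unitInterval) :
    proj α (edge w i h) = petal i h :=
  Quotient.sound ⟨w, by simp [smul_edge]⟩

lemma continuous_petal (i : α) : Continuous (petal i) :=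
  continuous_quotient_mk'.comp (continuous_edge 1 i)

lemma petal_zero_eq_petal_one (i j : α) : petal i 0 = petal j 1 := by
  rw [petal, ← proj_edge (of j)⁻¹ j 1]
  congr 1
  ext e
  simp [edgeCoord_zero, edgeCoord_one]

lemma exists_continuousMap_of_loops [Finite α] {Z : Type*} [TopologicalSpace Z]
    (l : α → C(unitInterval, Z)) (o : Z) (h0 : ∀ i, l i 0 = o) (h1 : ∀ i, l i 1 = o) :
    ∃ k : C(Rose α, Z), ∀ i h, k (petal i h) = l i h := by
  choose _ i h hedge using exists_edge (α := α)
  have hl01 (i) {t} (ht : t = 0 ∨ t = 1) : l i t = o := by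
    rcases ht with rfl | rfl <;> simp only [h0, h1]
  have hl (w j t) : l (i (edge w j t)) (h (edge w j t)) = l j t := by
    rcases edge_eq_edge (hedge (edge w j t)) with ⟨hi, ht⟩ | ⟨ht, ht'⟩
    · rw [hi, ht]
    · rw [hl01 _ ht, hl01 _ ht']
  let k : CayleyTree α → Z := fun x => l (i x) (h x)
  have hk : Continuous k := continuous_of_comp_edge fun w j => by
    simpa only [Function.comp_def, k, hl] using (l j).continuous
  have hinv (x y : CayleyTree α) (hxy : MulAction.orbitRel (FreeGroup α) _ x y) : k x = k y := by
    obtain ⟨g, rfl⟩ := hxy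
    obtain ⟨w, j, t, rfl⟩ := exists_edge y
    simp only [smul_edge, k, hl]
  exact ⟨⟨Quotient.lift k hinv, hk.quotient_lift hinv⟩, fun j t => hl 1 j t⟩

end Rose

end CayleyTree

namespace CayleyTree

variable {α : Type*} [DecidableEq α]

open FreeGroup

/-- The distance from the identity to the edge `e` in the Cayley graph. -/
def depth (e : FreeGroup α × α) : ℕ := min e.1.norm (e.1 * of e.2).norm

lemma depth_lt_norm {u : FreeGroup α} {e : FreeGroup α × α}
    (h : vertexCoord u e ≠ vertexCoord 1 e) :
    depth e < u.norm := by
  induction u using geodesic_induction with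
  | one => exact absurd rfl h
  | forward v i hlt ih =>
    obtain rfl | he := eq_or_ne e (v, i)
    · exact (min_le_left _ _).trans_lt hlt
    · exact (ih (vertexCoord_mul_of he ▸ h)).trans hlt
  | backward v i hlt ih =>
    obtain rfl | he := eq_or_ne e (v, i)
    · exact (min_le_right _ _).trans_lt hlt
    · exact (ih ((vertexCoord_mul_of he).symm ▸ h)).trans hlt

/-- The coordinates of `x`, moved towards those of the identity vertex so that the coordinate at
an edge `e` differs by at most `c (depth e)`. -/
noncomputable def truncate (c : ℕ → ℝ) (x : FreeGroup α × α → ℝ) (e : FreeGroup α × α) : ℝ :=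
  max (vertexCoord 1 e - c (depth e)) (min (vertexCoord 1 e + c (depth e)) (x e))

section truncate

variable {c : ℕ → ℝ} {x : FreeGroup α × α → ℝ} {e : FreeGroup α × α}

lemma truncate_of_eq (hc : 0 ≤ c (depth e)) (h : x e = vertexCoord 1 e) :
    truncate c x e = x e := by
  rw [truncate, h, min_eq_right (by linarith), max_eq_right (by linarith)]

lemma truncate_of_eq_one (hc : c (depth e) = 1) (hx : x e ∈ unitInterval) :
    truncate c x e = x e := by
  have := vertexCoord_mem_unitInterval (1 : FreeGroup α) e
  rw [truncate, hc, min_eq_right (by linarith [this.1, hx.2]),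
    max_eq_right (by linarith [this.2, hx.1])]

lemma truncate_of_eq_zero (hc : c (depth e) = 0) : truncate c x e = vertexCoord 1 e := by
  simp [truncate, hc]

lemma truncate_mem_unitInterval (hc : 0 ≤ c (depth e)) (hx : x e ∈ unitInterval) :
    truncate c x e ∈ unitInterval := by
  have h1 := vertexCoord_mem_unitInterval (1 : FreeGroup α) e
  exact ⟨le_max_of_le_right (le_min (by linarith [h1.1]) hx.1),
    max_le (by linarith [h1.2]) (min_le_of_right_le hx.2)⟩

end truncate

/-- Admissible radii for `truncate`: an edge is only entered once all edges closer to the identity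
are completely retained. -/
structure IsTruncation (c : ℕ → ℝ) : Prop where
  mem_unitInterval : ∀ n, c n ∈ unitInterval
  eq_one_of_lt : ∀ {m n}, m < n → c n ≠ 0 → c m = 1

lemma truncate_edge_mem {c : ℕ → ℝ} (hc : IsTruncation c) {w v : FreeGroup α} {i : α}
    (hv : v = w ∨ v = w * of i) (hdepth : depth (w, i) = v.norm)
    (hmem : ∃ y : CayleyTree α, y.1 = truncate c (vertexCoord v)) (h : unitInterval) :
    ∃ y : CayleyTree α, y.1 = truncate c (edge w i h) := by
  have hagree {e} (he : e ≠ (w, i)) : edge w i h e = vertexCoord v e := by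
    rcases hv with rfl | rfl
    · rw [edge_apply, edgeCoord_of_ne he]
    · rw [edge_apply, edgeCoord_of_ne he, vertexCoord_mul_of he]
  have hc0 (n) := (hc.mem_unitInterval n).1
  by_cases hcv : c v.norm = 0
  · obtain ⟨y, hy⟩ := hmem
    refine ⟨y, hy.trans (funext fun e => ?_)⟩
    obtain rfl | he := eq_or_ne e (w, i)
    · rw [truncate_of_eq_zero (hdepth ▸ hcv), truncate_of_eq_zero (hdepth ▸ hcv)]
    · rw [truncate, truncate, hagree he]
  · refine ⟨edge w i ⟨truncate c (edge w i h) (w, i),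
      truncate_mem_unitInterval (hc0 _) (coord_mem_unitInterval _ _)⟩, funext fun e => ?_⟩
    obtain rfl | he := eq_or_ne e (w, i)
    · simp
    rw [edge_apply, edgeCoord_of_ne he, ← edgeCoord_of_ne he h, ← edge_apply]
    symm
    by_cases h1 : vertexCoord v e = vertexCoord 1 e
    · exact truncate_of_eq (hc0 _) ((hagree he).trans h1)
    · exact truncate_of_eq_one (hc.eq_one_of_lt (depth_lt_norm h1) hcv)
        (coord_mem_unitInterval _ _)

lemma truncate_vertexCoord_mem [Nonempty α] {c : ℕ → ℝ} (hc : IsTruncation c) (u : FreeGroup α) :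
    ∃ y : CayleyTree α, y.1 = truncate c (vertexCoord u) := by
  induction u using geodesic_induction with
  | one =>
    obtain ⟨i⟩ := ‹Nonempty α›
    exact ⟨edge 1 i 0, funext fun e => by
      rw [truncate_of_eq (hc.mem_unitInterval _).1 rfl, edge_apply, Icc.coe_zero, edgeCoord_zero]⟩
  | forward v i hlt ih =>
    have h := truncate_edge_mem hc (w := v) (i := i) (.inl rfl) (min_eq_left hlt.le) ih 1
    simpa only [edge, Icc.coe_one, edgeCoord_one] using h
  | backward v i hlt ih =>
    have h := truncate_edge_mem hc (w := v) (i := i) (.inr rfl) (min_eq_right hlt.le) ih 0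
    simpa only [edge, Icc.coe_zero, edgeCoord_zero] using h

lemma truncate_mem [Nonempty α] {c : ℕ → ℝ} (hc : IsTruncation c) (x : CayleyTree α) :
    ∃ y : CayleyTree α, y.1 = truncate c x := by
  obtain ⟨w, i, h, rfl⟩ := exists_edge x
  rcases min_choice w.norm (w * of i).norm with hmin | hmin
  · exact truncate_edge_mem hc (.inl rfl) hmin (truncate_vertexCoord_mem hc _) h
  · exact truncate_edge_mem hc (.inr rfl) hmin (truncate_vertexCoord_mem hc _) h

/-- A piecewise linear form of the truncation at the ball of radius `s / (1 - s)`. -/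
noncomputable def ballRadii (s : ℝ) (n : ℕ) : ℝ := max 0 (min 1 ((s * (n + 1) - n) * (n + 2)))

lemma isTruncation_ballRadii (s : ℝ) : IsTruncation (ballRadii s) where
  mem_unitInterval _ := ⟨le_max_left _ _, max_le zero_le_one (min_le_left _ _)⟩
  eq_one_of_lt {m n} hmn hn := by
    have hmn' : (m : ℝ) + 1 ≤ n := by exact_mod_cast hmn
    have hpos : n < s * (n + 1) := by
      by_contra! hle
      refine hn (max_eq_left (min_le_of_right_le ?_))
      exact mul_nonpos_of_nonpos_of_nonneg (by linarith) (by positivity)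
    have hs' : m + 1 < s * (m + 2) := by
      by_contra! hle
      nlinarith [mul_le_mul_of_nonneg_left hle (by positivity : (0 : ℝ) ≤ n + 1)]
    have hone : 1 ≤ (s * (m + 1) - m) * (m + 2) := by nlinarith
    rw [ballRadii, min_eq_left hone, max_eq_right zero_le_one]

instance [Nonempty α] : ContractibleSpace (CayleyTree α) := by
  rw [contractible_iff_id_nullhomotopic]
  choose r hr using fun s : unitInterval => truncate_mem (α := α) (isTruncation_ballRadii s)
  let base : CayleyTree α := edge 1 (Classical.arbitrary α) 0
  have hcont : Continuous fun p : unitInterval × CayleyTree α => r p.1 p.2 := by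
    refine continuous_induced_rng.mpr (continuous_pi fun e => ?_)
    change Continuous fun p : unitInterval × CayleyTree α => (r p.1 p.2).1 e
    have hcoord : Continuous fun p : unitInterval × CayleyTree α => p.2 e :=
      (continuous_coord e).comp continuous_snd
    simp only [hr, truncate, ballRadii]
    exact (continuous_const.sub (by fun_prop)).max
      ((continuous_const.add (by fun_prop)).min hcoord)
  refine ⟨base, .symm ⟨⟨⟨_, hcont⟩, fun x => ?_, fun x => ?_⟩⟩⟩
  · ext e
    have h0 : ballRadii 0 (depth e) = 0 := by
      refine max_eq_left (min_le_of_right_le ?_)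
      rw [zero_mul, zero_sub]
      exact mul_nonpos_of_nonpos_of_nonneg (by simp) (by positivity)
    simpa [hr, base, edgeCoord_zero] using truncate_of_eq_zero h0
  · ext e
    have h1 : ballRadii 1 (depth e) = 1 := by
      have : (1 : ℝ) ≤ (1 * (depth e + 1) - depth e) * (depth e + 2) := by linarith
      rw [ballRadii, min_eq_left this, max_eq_right zero_le_one]
    simpa [hr] using truncate_of_eq_one h1 (coord_mem_unitInterval x e)

end CayleyTree

section MoebiusBand

lemma isQuotientMap_qm : Topology.IsQuotientMap qm := isQuotientMap_quot_mk

lemma convex_Sq : Convex ℝ Sq := (convex_Icc 0 1).prod (convex_Icc (-1) 1)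

instance : ContractibleSpace Sq :=
  convex_Sq.contractibleSpace ⟨(0, 0), by constructor <;> simp⟩

instance : LocallyPathConnectedSpace Sq := convex_Sq.locallyPathConnectedSpace

lemma isPreconnected_preimage_val_Sq {s : Set (ℝ × ℝ)} (hs : Convex ℝ s) :
    IsPreconnected ((↑) ⁻¹' s : Set Sq) := by
  rw [← Topology.IsInducing.subtypeVal.isPreconnected_image, Subtype.image_preimage_coe]
  exact (convex_Sq.inter hs).isPreconnected

/-- The left side of the square, parametrized upwards. -/
def leftSide : C(Icc (-1 : ℝ) 1, Sq) where
  toFun y := ⟨(0, y), by simp, y.2⟩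

/-- The right side of the square, parametrized downwards, so that `leftSide y` and `rightSide y`
are glued in the Möbius band. -/
def rightSide : C(Icc (-1 : ℝ) 1, Sq) where
  toFun y := ⟨(1, -y), by simp, neg_le_neg y.2.2, neg_le.mp y.2.1⟩

lemma qm_rightSide (y : Icc (-1 : ℝ) 1) : qm (rightSide y) = qm (leftSide y) :=
  (Quot.sound (.inr (.inl ⟨rfl, rfl, (neg_neg _).symm⟩))).symm

lemma rel_induction {P : Sq → Sq → Prop} (refl : ∀ p, P p p)
    (side : ∀ y, P (leftSide y) (rightSide y)) (symm_side : ∀ y, P (rightSide y) (leftSide y))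
    {p q : Sq} (h : rel p q) : P p q := by
  obtain ⟨⟨x, y⟩, hx, hy⟩ := p
  obtain ⟨⟨x', y'⟩, hx', hy'⟩ := q
  rcases h with h | ⟨h, h', h''⟩ | ⟨h, h', h''⟩
  · cases h
    exact refl _
  · obtain rfl : x = 0 := h
    obtain rfl : x' = 1 := h'
    obtain rfl : y' = -y := by simp only at h''; linarith
    exact side ⟨y, hy⟩
  · obtain rfl : x = 1 := h
    obtain rfl : x' = 0 := h'
    obtain rfl : y = -y' := by simp only at h''; linarith
    exact symm_side ⟨y', hy'⟩

section Lifting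

variable {E B G : Type*} [TopologicalSpace E] [TopologicalSpace B] [Group G] [MulAction G E]
  {p : E → B}

lemma exists_lift_Sq (hp : IsQuotientCoveringMap p G) (f : C(Sq, B)) :
    ∃ F : C(Sq, E), ∀ q, p (F q) = f q := by
  let q₀ : Sq := leftSide ⟨0, by simp⟩
  obtain ⟨e₀, he₀⟩ := hp.surjective (f q₀)
  obtain ⟨F, ⟨-, hF⟩, -⟩ := hp.isCoveringMap.existsUnique_continuousMap_lifts f q₀ e₀ he₀
  exact ⟨F, congrFun hF⟩

lemma lift_eq_of_convex (hp : IsCoveringMap p) {F : C(Sq, E)} {s : Set (ℝ × ℝ)} (hs : Convex ℝ s)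
    {b : B} (hb : ∀ q : Sq, (q : ℝ × ℝ) ∈ s → p (F q) = b) {q q' : Sq} (hq : (q : ℝ × ℝ) ∈ s)
    (hq' : (q' : ℝ × ℝ) ∈ s) : F q = F q' :=
  hp.constOn_of_comp (isPreconnected_preimage_val_Sq hs) F.continuous.continuousOn
    (fun a ha a' ha' => (hb a ha).trans (hb a' ha').symm) hq hq'

lemma exists_smul_eq_of_lifts {Y : Type*} [TopologicalSpace Y] [ConnectedSpace Y]
    (hp : IsQuotientCoveringMap p G) (F F' : C(Y, E)) (h : ∀ y, p (F' y) = p (F y)) :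
    ∃ g : G, ∀ y, F' y = g • F y := by
  obtain ⟨y₀⟩ := ‹ConnectedSpace Y›.toNonempty
  obtain ⟨g, hg : g • F y₀ = F' y₀⟩ := hp.apply_eq_iff_mem_orbit.mp (h y₀)
  have hgF (y) : p (g • F y) = p (F y) :=
    hp.apply_eq_iff_mem_orbit.mpr (MulAction.mem_orbit _ g)
  exact ⟨g, congrFun (hp.isCoveringMap.eq_of_comp_eq F'.continuous
    ((hp.continuous_const_smul g).comp F.continuous)
    (funext fun y => (h y).trans (hgF y).symm) y₀ hg.symm)⟩

-- Capping off the boundary of the Möbius band gives the projective plane, whose fundamental group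
-- has order two.
lemma exists_lift_of_const_on_boundary (hp : IsQuotientCoveringMap p G)
    (hG : ∀ g : G, g * g = 1 → g = 1) (f : C(M, B)) {b : B}
    (hf : ∀ q : Sq, (q : ℝ × ℝ).2 = 1 ∨ (q : ℝ × ℝ).2 = -1 → f (qm q) = b) :
    ∃ Φ : C(M, E), ∀ m, p (Φ m) = f m := by
  have := hp.isCancelSMul
  have hcov := hp.isCoveringMap
  obtain ⟨F, hF⟩ := exists_lift_Sq hp (f.comp ⟨qm, isQuotientMap_qm.continuous⟩)
  have hF_row (y : ℝ) (hy : y = 1 ∨ y = -1) {q q' : Sq} (hq : (q : ℝ × ℝ).2 = y)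
      (hq' : (q' : ℝ × ℝ).2 = y) : F q = F q' :=
    lift_eq_of_convex hcov (s := Prod.snd ⁻¹' {y})
      ((convex_singleton y).linear_preimage (.snd ℝ ℝ ℝ))
      (fun q hq => (hF q).trans (hf q (hy.imp hq.trans hq.trans))) hq hq'
  let bot : Icc (-1 : ℝ) 1 := ⟨-1, by simp⟩
  let top : Icc (-1 : ℝ) 1 := ⟨1, by simp⟩
  have htop : F (rightSide bot) = F (leftSide top) := hF_row 1 (.inl rfl) (neg_neg 1) rfl
  have hbot : F (rightSide top) = F (leftSide bot) := hF_row (-1) (.inr rfl) rfl rfl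
  have : ConnectedSpace (Icc (-1 : ℝ) 1) :=
    Subtype.connectedSpace (isConnected_Icc (by norm_num))
  obtain ⟨g, hsides⟩ := exists_smul_eq_of_lifts hp (F.comp leftSide) (F.comp rightSide)
    fun y => (hF _).trans ((congrArg f (qm_rightSide y)).trans (hF _).symm)
  simp only [ContinuousMap.comp_apply] at hsides
  have hg_one : g = 1 := by
    refine hG g (IsCancelSMul.right_cancel _ _ (F (leftSide bot)) ?_)
    rw [mul_smul, ← hsides, htop, ← hsides, hbot, one_smul]
  have hrel (q q' : Sq) (h : rel q q') : F q = F q' := by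
    refine rel_induction (P := fun q q' => F q = F q') (fun _ => rfl) ?_ ?_ h <;>
      simp [hsides, hg_one]
  refine ⟨⟨Quot.lift F hrel, continuous_quot_lift hrel F.continuous⟩, fun m => ?_⟩
  obtain ⟨q, rfl⟩ := isQuotientMap_qm.surjective m
  exact hF q

end Lifting

end MoebiusBand

section PuncturedMoebiusBand

lemma isQuotientMap_restrictPreimage_of_isClosed {A B : Type*} [TopologicalSpace A]
    [TopologicalSpace B] {f : A → B} (hf : Topology.IsQuotientMap f) {s : Set B} (hs : IsClosed s) :
    Topology.IsQuotientMap (s.restrictPreimage f) := by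
  refine Topology.isQuotientMap_iff_isClosed.mpr
    ⟨hf.surjective.restrictPreimage s, fun t =>
      ⟨fun ht => ht.preimage hf.continuous.restrictPreimage, fun ht => ?_⟩⟩
  rw [hs.isClosedEmbedding_subtypeVal.isClosed_iff_image_isClosed, ← hf.isClosed_preimage,
    ← image_val_preimage_restrictPreimage]
  exact (hs.preimage hf.continuous).isClosedMap_subtype_val _ ht

/-- The sup-norm distance of a point of the plane to the centre of the removed disc. -/
noncomputable def rad (p : ℝ × ℝ) : ℝ := dist p (1 / 2, 0)

lemma rad_mk (x y : ℝ) : rad (x, y) = max |x - 1 / 2| |y| := by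
  simp [rad, Prod.dist_eq, Real.dist_eq]

@[fun_prop]
lemma continuous_rad : Continuous rad := by
  unfold rad
  fun_prop

lemma rad_eq_of_rel {p q : Sq} (h : rel p q) : rad p = rad q := by
  refine rel_induction (P := fun p q => rad p = rad q) (fun _ => rfl) ?_ ?_ h <;> intro y <;>
    norm_num [leftSide, rightSide, rad_mk, abs_of_pos]

/-- The distance to the centre of the removed disc, as a function on the Möbius band; the two
boundary circles are its level sets `1` and `1 / 4`. -/
noncomputable def radius : C(M, ℝ) where
  toFun := Quot.lift (fun p => rad p) fun _ _ => rad_eq_of_rel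
  continuous_toFun := continuous_quot_lift _ (by fun_prop)

@[simp]
lemma radius_qm (p : Sq) : radius (qm p) = rad p := rfl

lemma rad_le_one (p : Sq) : rad p ≤ 1 := by
  obtain ⟨⟨x, y⟩, hx, hy⟩ := p
  rw [rad_mk, max_le_iff, abs_le, abs_le]
  exact ⟨⟨by linarith [hx.1], by linarith [hx.2]⟩, hy⟩

lemma rad_eq_one_iff (p : Sq) : rad p = 1 ↔ (p : ℝ × ℝ).2 = 1 ∨ (p : ℝ × ℝ).2 = -1 := by
  obtain ⟨⟨x, y⟩, hx, hy⟩ := p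
  have hx' : |x - 1 / 2| ≤ 1 / 2 := abs_le.mpr ⟨by linarith [hx.1], by linarith [hx.2]⟩
  rw [rad_mk, ← abs_eq one_pos.le]
  grind

lemma mem_Xset_iff (m : M) : m ∈ Xset ↔ 1 / 4 ≤ radius m := by
  refine ⟨fun hm => ?_, fun hm ⟨p, hp, hpm⟩ => ?_⟩
  · obtain ⟨p, rfl⟩ := isQuotientMap_qm.surjective m
    exact not_lt.mp fun hp => hm ⟨p, hp, rfl⟩
  · exact (Metric.mem_ball.mp hp).not_ge (by rwa [← hpm] at hm)

lemma radius_mem_Icc (x : X) : radius x ∈ Icc (1 / 4 : ℝ) 1 := by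
  refine ⟨(mem_Xset_iff x).mp x.2, ?_⟩
  obtain ⟨p, hp⟩ := isQuotientMap_qm.surjective (x : M)
  exact hp ▸ rad_le_one p

lemma mem_C1_iff (x : X) : x ∈ C1 ↔ radius x = 1 := by
  refine ⟨fun ⟨p, hpx, hp⟩ => ?_, fun hx => ?_⟩
  · rw [← hpx, radius_qm, rad_eq_one_iff]
    exact hp
  · obtain ⟨p, hp⟩ := isQuotientMap_qm.surjective (x : M)
    exact ⟨p, hp, (rad_eq_one_iff p).mp (by rw [← hx, ← hp, radius_qm])⟩

lemma mem_C2_iff (x : X) : x ∈ C2 ↔ radius x = 1 / 4 := by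
  refine ⟨fun ⟨_, hpx, hp⟩ => hpx ▸ hp, fun hx => ?_⟩
  obtain ⟨p, hp⟩ := isQuotientMap_qm.surjective (x : M)
  exact ⟨p, hp, (congrArg radius hp).trans hx⟩

lemma mem_Bd_iff (x : X) : x ∈ Bd ↔ radius x = 1 ∨ radius x = 1 / 4 := by
  rw [Bd, mem_union, mem_C1_iff, mem_C2_iff]

lemma isClosed_Xset : IsClosed Xset := by
  rw [show Xset = {m | 1 / 4 ≤ radius m} from Set.ext mem_Xset_iff]
  exact isClosed_le continuous_const radius.continuous

/-- The quotient map from the punctured square onto the punctured Möbius band. -/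
def qX : C(qm ⁻¹' Xset, X) :=
  ⟨Xset.restrictPreimage qm, isQuotientMap_qm.continuous.restrictPreimage⟩

lemma isQuotientMap_qX : Topology.IsQuotientMap qX :=
  isQuotientMap_restrictPreimage_of_isClosed isQuotientMap_qm isClosed_Xset

@[simp]
lemma radius_qX (p : qm ⁻¹' Xset) : radius (qX p) = rad p := rfl

lemma half_le_rad_leftSide (y : Icc (-1 : ℝ) 1) : 1 / 2 ≤ rad (leftSide y) := by
  rw [leftSide, ContinuousMap.coe_mk, rad_mk]
  exact le_max_of_le_left (by norm_num)

lemma leftSide_mem (y : Icc (-1 : ℝ) 1) : leftSide y ∈ qm ⁻¹' Xset :=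
  (mem_Xset_iff _).mpr (le_trans (by norm_num) (half_le_rad_leftSide y))

lemma rightSide_mem (y : Icc (-1 : ℝ) 1) : rightSide y ∈ qm ⁻¹' Xset := by
  rw [mem_preimage, qm_rightSide]
  exact leftSide_mem y

lemma qX_rightSide (y : Icc (-1 : ℝ) 1) :
    qX ⟨rightSide y, rightSide_mem y⟩ = qX ⟨leftSide y, leftSide_mem y⟩ :=
  Subtype.ext (qm_rightSide y)

lemma exists_lift_qX {Y Z : Type*} [TopologicalSpace Y] [LocallyCompactSpace Y]
    [TopologicalSpace Z] (K : C((qm ⁻¹' Xset) × Y, Z))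
    (hK : ∀ v y, K (⟨leftSide v, leftSide_mem v⟩, y) = K (⟨rightSide v, rightSide_mem v⟩, y)) :
    ∃ k : C(X × Y, Z), ∀ p y, k (qX p, y) = K (p, y) := by
  have hrel {p q : Sq} (h : rel p q) : ∀ hp hq y, K (⟨p, hp⟩, y) = K (⟨q, hq⟩, y) :=
    rel_induction (P := fun p q => ∀ hp hq y, K (⟨p, hp⟩, y) = K (⟨q, hq⟩, y))
      (fun _ _ _ _ => rfl) (fun v _ _ => hK v) (fun v _ _ y => (hK v y).symm) h
  have hgen {p q : Sq} (h : Relation.EqvGen rel p q) :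
      ∀ hp hq y, K (⟨p, hp⟩, y) = K (⟨q, hq⟩, y) := by
    induction h with
    | rel p q h => exact hrel h
    | refl p => exact fun _ _ _ => rfl
    | symm p q _ ih => exact fun hp hq y => (ih hq hp y).symm
    | trans p q r hpq _ ih ih' =>
      intro hp hr y
      have hq : qm q ∈ Xset := by rwa [show qm q = qm p from (Quot.eq.mpr hpq).symm]
      exact (ih hp hq y).trans (ih' hq hr y)
  have hfac (p q) (h : qX p = qX q) (y) : K (p, y) = K (q, y) :=
    hgen (Quot.eq.mp (congrArg Subtype.val h)) p.2 q.2 y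
  let k (z : X × Y) : Z := K (Function.surjInv isQuotientMap_qX.surjective z.1, z.2)
  have hk (p y) : k (qX p, y) = K (p, y) := hfac _ _ (Function.surjInv_eq _ _) y
  refine ⟨⟨k, isQuotientMap_qX.continuous_lift_prod_left ?_⟩, hk⟩
  simpa only [hk] using K.continuous

lemma mem_Sq_of_rad_le {p : ℝ × ℝ} (hp : rad p ≤ 1 / 2) : p ∈ Sq := by
  obtain ⟨x, y⟩ := p
  rw [rad_mk, max_le_iff, abs_le, abs_le] at hp
  exact ⟨⟨by linarith, by linarith⟩, by linarith, by linarith⟩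

/-- Radial displacement of the square from radius `r` to radius `s`. Inside the largest centred
square contained in the strip it is a homothety; outside it moves points vertically. -/
noncomputable def radialMove (r s : ℝ) (p : ℝ × ℝ) : ℝ × ℝ :=
  (1 / 2 + min s (1 / 2) / min r (1 / 2) * (p.1 - 1 / 2), s / r * p.2)

lemma radialMove_eq_homothety {r s : ℝ} (hr : r ≤ 1 / 2) (hs : s ≤ 1 / 2) (p : ℝ × ℝ) :
    radialMove r s p = AffineMap.homothety ((1 / 2, 0) : ℝ × ℝ) (s / r) p := by
  rw [radialMove, min_eq_left hr, min_eq_left hs]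
  ext <;> simp [AffineMap.homothety_apply, add_comm]

lemma radialMove_eq_of_half_le {r s : ℝ} (hr : 1 / 2 ≤ r) (hs : 1 / 2 ≤ s) (p : ℝ × ℝ) :
    radialMove r s p = (p.1, s / r * p.2) := by
  simp only [radialMove, min_eq_right hr, min_eq_right hs]
  ext <;> norm_num

lemma radialMove_self {r : ℝ} (hr : r ≠ 0) (p : ℝ × ℝ) : radialMove r r p = p := by
  rcases le_total r (1 / 2) with h | h
  · rw [radialMove_eq_homothety h h, div_self hr, AffineMap.homothety_one, AffineMap.id_apply]
  · rw [radialMove_eq_of_half_le h h, div_self hr, one_mul]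

lemma rad_radialMove {s : ℝ} {p : ℝ × ℝ} (hp : p ∈ Sq) (h0 : 0 < rad p) (hs : 0 ≤ s)
    (hle : rad p ≤ 1 / 2 → s ≤ 1 / 2) (hge : 1 / 2 ≤ rad p → 1 / 2 ≤ s) :
    rad (radialMove (rad p) s p) = s := by
  rcases lt_trichotomy (rad p) (1 / 2) with h | h | h
  · rw [radialMove_eq_homothety h.le (hle h.le), rad, dist_homothety_center, dist_comm _ p, ← rad,
      Real.norm_of_nonneg (by positivity), div_mul_cancel₀ _ h0.ne']
  · obtain rfl : s = rad p := by linarith [hle h.le, hge h.ge]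
    rw [radialMove_self h0.ne']
  · obtain ⟨x, y⟩ := p
    have hx : |x - 1 / 2| ≤ 1 / 2 := abs_le.mpr ⟨by linarith [hp.1.1], by linarith [hp.1.2]⟩
    have hy : |y| = rad (x, y) := by
      rw [rad_mk] at h ⊢
      exact (max_eq_right_of_lt ((lt_max_iff.mp h).resolve_left hx.not_gt |> hx.trans_lt)).symm
    rw [radialMove_eq_of_half_le h.le (hge h.le), rad_mk, abs_mul, hy,
      abs_of_nonneg (div_nonneg hs h0.le), div_mul_cancel₀ _ h0.ne']
    exact max_eq_right (hx.trans (hge h.le))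

lemma radialMove_mem_Sq {s : ℝ} {p : ℝ × ℝ} (hp : p ∈ Sq) (h0 : 0 < rad p) (hs : s ∈ Icc 0 1)
    (hle : rad p ≤ 1 / 2 → s ≤ 1 / 2) (hge : 1 / 2 ≤ rad p → 1 / 2 ≤ s) :
    radialMove (rad p) s p ∈ Sq := by
  have hrad := rad_radialMove hp h0 hs.1 hle hge
  rcases le_total (rad p) (1 / 2) with h | h
  · exact mem_Sq_of_rad_le (hrad.trans_le (hle h))
  · rw [radialMove_eq_of_half_le h (hge h)] at hrad ⊢
    rw [rad_mk] at hrad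
    exact ⟨hp.1, abs_le.mp ((le_max_right _ _).trans_eq hrad |>.trans hs.2)⟩

lemma exists_radial_flow {Y : Type*} [TopologicalSpace Y] [LocallyCompactSpace Y] (ψ : C(X × Y, ℝ))
    (hψ : ∀ z, ψ z ∈ Icc (1 / 4) 1)
    (hle : ∀ (x : X) y, radius x ≤ 1 / 2 → ψ (x, y) ≤ 1 / 2)
    (hge : ∀ (x : X) y, 1 / 2 ≤ radius x → 1 / 2 ≤ ψ (x, y)) :
    ∃ S : C(X × Y, X), (∀ x y, radius (S (x, y)) = ψ (x, y)) ∧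
      ∀ (x : X) y, ψ (x, y) = radius x → S (x, y) = x := by
  have hpos (p : qm ⁻¹' Xset) : 0 < rad p := by linarith [(radius_mem_Icc (qX p)).1, radius_qX p]
  have hψ0 (z) : 0 ≤ ψ z := by linarith [(hψ z).1]
  let move (z : (qm ⁻¹' Xset) × Y) : ℝ × ℝ := radialMove (rad z.1) (ψ (qX z.1, z.2)) z.1
  have hmove_mem (z) : move z ∈ Sq :=
    radialMove_mem_Sq z.1.1.2 (hpos z.1) ⟨hψ0 _, (hψ _).2⟩ (hle (qX z.1) z.2) (hge (qX z.1) z.2)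
  have hmove_rad (z) : rad (move z) = ψ (qX z.1, z.2) :=
    rad_radialMove z.1.1.2 (hpos z.1) (hψ0 _) (hle (qX z.1) z.2) (hge (qX z.1) z.2)
  have hmove_X (z) : qm ⟨move z, hmove_mem z⟩ ∈ Xset := by
    rw [mem_Xset_iff, radius_qm, hmove_rad]
    exact (hψ _).1
  have hmove_cont : Continuous move := by
    unfold move radialMove
    have hmin (p : qm ⁻¹' Xset) : min (rad p) (1 / 2) ≠ 0 := (lt_min (hpos p) one_half_pos).ne'
    fun_prop (disch := first | exact fun z => hmin z.1 | exact fun z => (hpos z.1).ne')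
  have hsides (v y) : rel ⟨_, hmove_mem (⟨leftSide v, leftSide_mem v⟩, y)⟩
      ⟨_, hmove_mem (⟨rightSide v, rightSide_mem v⟩, y)⟩ := by
    have hrad : rad (rightSide v) = rad (leftSide v) := congrArg radius (qm_rightSide v)
    have hr := half_le_rad_leftSide v
    have hs := hge (qX ⟨leftSide v, leftSide_mem v⟩) y hr
    simp only [move, qX_rightSide, hrad, radialMove_eq_of_half_le hr hs]
    exact .inr (.inl ⟨rfl, rfl, by simp [leftSide, rightSide]⟩)
  obtain ⟨S, hS⟩ := exists_lift_qX (Z := X)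
    ⟨fun z => qX ⟨⟨move z, hmove_mem z⟩, hmove_X z⟩, by fun_prop⟩
    fun v y => Subtype.ext (Quot.sound (hsides v y))
  refine ⟨S, fun x y => ?_, fun x y h => ?_⟩ <;> obtain ⟨p, rfl⟩ := isQuotientMap_qX.surjective x
  · rw [hS]
    exact hmove_rad _
  · rw [hS]
    simp [move, h, radialMove_self (hpos p).ne']

end PuncturedMoebiusBand

section Gluing

variable {A Z : Type*} [TopologicalSpace A] [TopologicalSpace Z]

lemma exists_continuousMap_of_isClosed_cover {s t : Set A} (hs : IsClosed s) (ht : IsClosed t)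
    (hst : s ∪ t = univ) (f : C(s, Z)) (g : C(t, Z))
    (hfg : ∀ a (has : a ∈ s) (hat : a ∈ t), f ⟨a, has⟩ = g ⟨a, hat⟩) :
    ∃ k : C(A, Z), (∀ a : s, k a = f a) ∧ ∀ a : t, k a = g a := by
  classical
  have hmem_t {a : A} (ha : a ∉ s) : a ∈ t := (hst.ge (mem_univ a)).resolve_left ha
  let k (a : A) : Z := if ha : a ∈ s then f ⟨a, ha⟩ else g ⟨a, hmem_t ha⟩
  have hkf (a : s) : k a = f a := dif_pos a.2
  have hkg (a : t) : k a = g a := by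
    by_cases ha : (a : A) ∈ s
    · exact (hkf ⟨a, ha⟩).trans (hfg a ha a.2)
    · exact dif_neg ha
  have hk_s : ContinuousOn k s := by
    rw [continuousOn_iff_continuous_domRestrict, show s.domRestrict k = f from funext hkf]
    exact f.continuous
  have hk_t : ContinuousOn k t := by
    rw [continuousOn_iff_continuous_domRestrict, show t.domRestrict k = g from funext hkg]
    exact g.continuous
  have hk : Continuous k := by
    rw [← continuousOn_univ, ← hst]
    exact hk_s.union_of_isClosed hk_t hs ht
  exact ⟨⟨k, hk⟩, hkf, hkg⟩

lemma exists_damped_homotopy {f : C(A, Z)} (u : C(A, ℝ)) (F : C(unitInterval × {a | 0 ≤ u a}, Z))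
    (hF : ∀ a : {a | 0 ≤ u a}, F (0, a) = f a) :
    ∃ G : C(unitInterval × A, Z),
      (∀ t (a : {a | 0 ≤ u a}), G (t, a) = F (t * projIcc 0 1 zero_le_one (u a), a)) ∧
        ∀ t a, u a ≤ 0 → G (t, a) = f a := by
  obtain ⟨G, hG_nonneg, hG_nonpos⟩ := exists_continuousMap_of_isClosed_cover
    (s := {z : unitInterval × A | 0 ≤ u z.2}) (t := {z : unitInterval × A | u z.2 ≤ 0})
    (isClosed_le continuous_const (by fun_prop)) (isClosed_le (by fun_prop) continuous_const)
    (eq_univ_of_forall fun z => le_total 0 (u z.2))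
    (F.comp ⟨fun z => (z.1.1 * projIcc 0 1 zero_le_one (u z.1.2), ⟨z.1.2, z.2⟩), by fun_prop⟩)
    (f.comp ⟨fun z => z.1.2, by fun_prop⟩)
    (fun z hz hz' => by
      simpa [projIcc_of_le_left zero_le_one (show u z.2 ≤ 0 from hz')] using hF ⟨z.2, hz⟩)
  exact ⟨G, fun t a => hG_nonneg ⟨(t, a), a.2⟩, fun t a ha => hG_nonpos ⟨(t, a), ha⟩⟩

end Gluing

section BoundaryHomotopy

lemma boundaryHomotopic_iff_homotopicWith {f g : C(X, X)} :
    BoundaryHomotopic f g ↔ f.HomotopicWith g BoundaryPreserving :=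
  ⟨fun ⟨H, hH⟩ => ⟨{ H with prop' := fun t x hx => hH x hx t }⟩,
    fun ⟨H⟩ => ⟨H.toHomotopy, fun _ hx t => H.prop t hx⟩⟩

lemma BoundaryHomotopic.trans {f g h : C(X, X)} (hfg : BoundaryHomotopic f g)
    (hgh : BoundaryHomotopic g h) : BoundaryHomotopic f h := by
  rw [boundaryHomotopic_iff_homotopicWith] at *
  exact ContinuousMap.HomotopicWith.trans hfg hgh

lemma BoundaryHomotopic.comp_left {f g g' : C(X, X)} (h : BoundaryHomotopic g g')
    (hf : BoundaryPreserving f) : BoundaryHomotopic (f.comp g) (f.comp g') := by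
  obtain ⟨H, hH⟩ := h
  exact ⟨(ContinuousMap.Homotopy.refl f).comp H, fun x hx t => hf (hH x hx t)⟩

lemma exists_push_collars_to_boundary :
    ∃ S : C(X, X), BoundaryHomotopic (.id X) S ∧ (∀ x : X, 3 / 4 ≤ radius x → S x ∈ C1) ∧
      ∀ x : X, radius x ≤ 3 / 8 → S x ∈ C2 := by
  let ψ : C(X × unitInterval, ℝ) :=
    ⟨fun z => max (1 / 4) (min (radius z.1 + z.2 * (radius z.1 - 1 / 2)) 1), by fun_prop⟩
  have hψ (x : X) (t) : ψ (x, t) = max (1 / 4) (min (radius x + t * (radius x - 1 / 2)) 1) := rfl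
  obtain ⟨S, hS, hS_eq⟩ := exists_radial_flow ψ
    (fun z => ⟨le_max_left _ _, max_le (by norm_num) (min_le_right _ _)⟩)
    (fun x t hx => max_le (by norm_num) (min_le_of_left_le (by nlinarith [t.2.1])))
    (fun x t hx => le_max_of_le_right (le_min (by nlinarith [t.2.1]) (by norm_num)))
  refine ⟨S.comp ((ContinuousMap.id X).prodMk (.const X 1)),
    ⟨⟨⟨fun z => S (z.2, z.1), by fun_prop⟩, fun x => hS_eq x 0 ?_, fun _ => rfl⟩,
      fun x hx t => ?_⟩, fun x hx => ?_, fun x hx => ?_⟩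
  · obtain ⟨h₀, h₁⟩ := radius_mem_Icc x
    simp [hψ, h₁, -one_div, h₀]
  · rw [mem_Bd_iff] at hx ⊢
    refine hx.imp (fun hx => ?_) (fun hx => ?_)
    · exact (hS x t).trans (by rw [hψ, hx, min_eq_right (by linarith [t.2.1])]; norm_num)
    · exact (hS x t).trans (by rw [hψ, hx, max_eq_left (min_le_of_left_le (by linarith [t.2.1]))])
  · exact (mem_C1_iff _).mpr ((hS x 1).trans
      (by rw [hψ, Icc.coe_one, min_eq_right (by linarith)]; norm_num))
  · exact (mem_C2_iff _).mpr ((hS x 1).trans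
      (by rw [hψ, Icc.coe_one, max_eq_left (min_le_of_left_le (by linarith))]))

lemma BoundaryHomotopic.boundaryPreserving_right {f g : C(X, X)} (h : BoundaryHomotopic f g) :
    BoundaryPreserving g := by
  obtain ⟨H, hH⟩ := h
  intro x hx
  simpa only [H.apply_one] using hH x hx 1

lemma exists_boundaryHomotopic_of_inessential {g : C(X, X)} (hg : BoundaryPreserving g)
    (u : C(X, ℝ)) (hu : MapsTo g {x | 0 ≤ u x} Bd) (hin : Inessential (restrictMap g hu)) :
    ∃ g', BoundaryHomotopic g g' ∧ (∃ b, ∀ x, 1 ≤ u x → g' x = b) ∧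
      ∀ x, u x ≤ 0 → g' x = g x := by
  obtain ⟨b, ⟨H⟩⟩ := hin
  obtain ⟨G, hG_nonneg, hG_nonpos⟩ := exists_damped_homotopy u
    ((⟨Subtype.val, continuous_subtype_val⟩ : C(Bd, X)).comp H.toContinuousMap)
    (fun a => congrArg Subtype.val (H.apply_zero a))
  replace hG_nonneg (t) (x) (hx : 0 ≤ u x) :
      G (t, x) = H (t * projIcc 0 1 zero_le_one (u x), ⟨x, hx⟩) := hG_nonneg t ⟨x, hx⟩
  have hG0 (x) : G (0, x) = g x := by
    rcases le_total 0 (u x) with hx | hx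
    · rw [hG_nonneg 0 x hx, zero_mul, H.apply_zero]
      rfl
    · exact hG_nonpos 0 x hx
  refine ⟨G.comp ((ContinuousMap.const X 1).prodMk (.id X)), ⟨⟨G, hG0, fun _ => rfl⟩,
    fun x hx t => ?_⟩, ⟨b, fun x hx => ?_⟩, fun x => hG_nonpos 1 x⟩
  · rcases le_total 0 (u x) with hux | hux
    · exact (hG_nonneg t x hux).symm ▸ Subtype.coe_prop _
    · exact (hG_nonpos t x hux).symm ▸ hg hx
  · have hproj : projIcc 0 1 zero_le_one (u x) = (1 : unitInterval) := projIcc_of_right_le _ hx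
    refine (hG_nonneg 1 x (zero_le_one.trans hx)).trans ?_
    rw [hproj, one_mul, H.apply_one, ContinuousMap.const_apply]

lemma inessential_restrictMap_of_eqOn_comp {f g S : C(X, X)} {s t u : Set X} {hf : MapsTo f s u}
    (h : Inessential (restrictMap f hf)) (hS : MapsTo S t s) {hg : MapsTo g t u}
    (hgf : EqOn g (f ∘ S) t) : Inessential (restrictMap g hg) := by
  have heq : restrictMap g hg = (restrictMap f hf).comp (restrictMap S hS) :=
    ContinuousMap.ext fun x => Subtype.ext (hgf x.2)
  exact heq ▸ ContinuousMap.Nullhomotopic.comp_left h (restrictMap S hS)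

/-- Maps that are constant near each of the two boundary circles. -/
def CollarConstant {Z : Type*} [TopologicalSpace Z] (f : C(X, Z)) : Prop :=
  (∃ c, ∀ x : X, 7 / 8 ≤ radius x → f x = c) ∧ ∃ c, ∀ x : X, radius x ≤ 5 / 16 → f x = c

lemma exists_collarConstant {f : C(X, X)} (hf : BoundaryPreserving f)
    (h1 : Inessential (restrictMap f (hf.mono_left subset_union_left : MapsTo f C1 Bd)))
    (h2 : Inessential (restrictMap f (hf.mono_left subset_union_right : MapsTo f C2 Bd))) :
    ∃ f₁, BoundaryHomotopic f f₁ ∧ CollarConstant f₁ := by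
  obtain ⟨S, hS, hSC1, hSC2⟩ := exists_push_collars_to_boundary
  have hfS : BoundaryHomotopic f (f.comp S) := hS.comp_left hf
  let u₁ : C(X, ℝ) := ⟨fun x => 8 * radius x - 6, by fun_prop⟩
  let u₂ : C(X, ℝ) := ⟨fun x => 6 - 16 * radius x, by fun_prop⟩
  have hu₁ (x : X) : u₁ x = 8 * radius x - 6 := rfl
  have hu₂ (x : X) : u₂ x = 6 - 16 * radius x := rfl
  have hS₁ : MapsTo S {x | 0 ≤ u₁ x} C1 := fun x (hx : 0 ≤ u₁ x) => hSC1 x (by linarith [hu₁ x])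
  have hS₂ : MapsTo S {x | 0 ≤ u₂ x} C2 := fun x (hx : 0 ≤ u₂ x) => hSC2 x (by linarith [hu₂ x])
  obtain ⟨g, hfg, ⟨c, hc⟩, hg⟩ := exists_boundaryHomotopic_of_inessential
    hfS.boundaryPreserving_right u₁ (fun x hx => hf (.inl (hS₁ hx)))
    (inessential_restrictMap_of_eqOn_comp h1 hS₁ fun _ _ => rfl)
  have hg₂ : EqOn g (f ∘ S) {x | 0 ≤ u₂ x} :=
    fun x (hx : 0 ≤ u₂ x) => hg x (by linarith [hu₁ x, hu₂ x])
  have hg₂_Bd : MapsTo g {x | 0 ≤ u₂ x} Bd := fun x hx => hg₂ hx ▸ hf (.inr (hS₂ hx))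
  have hg₂_in := inessential_restrictMap_of_eqOn_comp (hg := hg₂_Bd) h2 hS₂ hg₂
  obtain ⟨f₁, hgf₁, ⟨c', hc'⟩, hf₁⟩ := exists_boundaryHomotopic_of_inessential
    hfg.boundaryPreserving_right u₂ hg₂_Bd hg₂_in
  refine ⟨f₁, hfS.trans (hfg.trans hgf₁), ⟨c, fun x hx => ?_⟩, c', fun x hx => ?_⟩
  · rw [hf₁ x (by linarith [hu₂ x]), hc x (by linarith [hu₁ x])]
  · exact hc' x (by linarith [hu₂ x])

end BoundaryHomotopy

section RetractionOntoRose

open AffineMap (lineMap)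

lemma mem_preimage_Xset_iff (p : Sq) :
    p ∈ qm ⁻¹' Xset ↔
      (p : ℝ × ℝ).1 ≤ 1 / 4 ∨ 3 / 4 ≤ (p : ℝ × ℝ).1 ∨ 1 / 4 ≤ |(p : ℝ × ℝ).2| := by
  obtain ⟨⟨x, y⟩, hp⟩ := p
  rw [mem_preimage, mem_Xset_iff, radius_qm, rad_mk, le_max_iff, le_abs]
  grind

/-- The first coordinate of the retraction, as a parameter along a petal: it collapses the parts
of the square to the left and to the right of the removed disc. -/
noncomputable def petalParam (x : ℝ) : unitInterval := projIcc 0 1 zero_le_one (2 * x - 1 / 2)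

/-- The figure eight in the punctured Möbius band consists of the graphs of `height` and
`-height`. -/
noncomputable def height (h : ℝ) : ℝ := min (min h (1 - h)) (1 / 4)

@[fun_prop]
lemma continuous_petalParam : Continuous petalParam := by
  unfold petalParam
  fun_prop

@[fun_prop]
lemma continuous_height : Continuous height := by
  unfold height
  fun_prop

lemma petalParam_of_le {x : ℝ} (hx : x ≤ 1 / 4) : petalParam x = 0 :=
  projIcc_of_le_left _ (by linarith)

lemma petalParam_of_ge {x : ℝ} (hx : 3 / 4 ≤ x) : petalParam x = 1 :=
  projIcc_of_right_le _ (by linarith)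

@[simp]
lemma height_zero : height 0 = 0 := by norm_num [height]

@[simp]
lemma height_one : height 1 = 0 := by norm_num [height]

lemma height_mem_Icc (h : unitInterval) : height h ∈ Icc 0 (1 / 4) :=
  ⟨le_min (le_min h.2.1 (by linarith [h.2.2])) (by norm_num), min_le_right _ _⟩

lemma height_le_abs {p : Sq} (hp : p ∈ qm ⁻¹' Xset) :
    height (petalParam (p : ℝ × ℝ).1) ≤ |(p : ℝ × ℝ).2| := by
  rcases (mem_preimage_Xset_iff p).mp hp with h | h | h
  · simp [petalParam_of_le h]
  · simp [petalParam_of_ge h]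
  · exact (height_mem_Icc _).2.trans h

/-- The second coordinate of the retraction onto the figure eight. -/
noncomputable def clampHeight (p : ℝ × ℝ) : ℝ :=
  max (-height (petalParam p.1)) (min (height (petalParam p.1)) p.2)

@[fun_prop]
lemma continuous_clampHeight : Continuous clampHeight := by
  unfold clampHeight
  fun_prop

lemma clampHeight_of_nonneg {p : Sq} (hp : p ∈ qm ⁻¹' Xset) (h : 0 ≤ (p : ℝ × ℝ).2) :
    clampHeight p = height (petalParam (p : ℝ × ℝ).1) := by
  have := height_le_abs hp
  rw [abs_of_nonneg h] at this
  rw [clampHeight, min_eq_left this, max_eq_right]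
  linarith [(height_mem_Icc (petalParam (p : ℝ × ℝ).1)).1]

lemma clampHeight_of_nonpos {p : Sq} (hp : p ∈ qm ⁻¹' Xset) (h : (p : ℝ × ℝ).2 ≤ 0) :
    clampHeight p = -height (petalParam (p : ℝ × ℝ).1) := by
  have := height_le_abs hp
  rw [abs_of_nonpos h] at this
  exact max_eq_left (min_le_of_right_le (by linarith))

lemma graph_mem_Sq (h : unitInterval) {y : ℝ} (hy : |y| = height h) : ((h : ℝ), y) ∈ Sq :=
  ⟨h.2, abs_le.mp (by linarith [(height_mem_Icc h).2])⟩

lemma graph_mem (h : unitInterval) {y : ℝ} (hy : |y| = height h) :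
    ⟨(h, y), graph_mem_Sq h hy⟩ ∈ qm ⁻¹' Xset := by
  rw [mem_preimage_Xset_iff, hy, height]
  grind

/-- Collapses horizontally for `s ≤ 1 / 2`, then vertically, so that no point crosses the removed
disc. -/
noncomputable def flatten (s : ℝ) (p : ℝ × ℝ) : ℝ × ℝ :=
  (lineMap p.1 (petalParam p.1 : ℝ) (min (2 * s) 1),
    lineMap p.2 (clampHeight p) (max (2 * s - 1) 0))

@[fun_prop]
lemma continuous_flatten : Continuous fun z : ℝ × (ℝ × ℝ) => flatten z.1 z.2 := by
  unfold flatten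
  fun_prop

lemma flatten_zero (p : ℝ × ℝ) : flatten 0 p = p := by simp [flatten]

lemma flatten_one (p : ℝ × ℝ) : flatten 1 p = (↑(petalParam p.1), clampHeight p) := by
  norm_num [flatten]

lemma flatten_mem_Sq (s : unitInterval) (p : Sq) : flatten s p ∈ Sq := by
  have hc := height_mem_Icc (petalParam (p : ℝ × ℝ).1)
  have hclamp : clampHeight p ∈ Icc (-1) 1 :=
    ⟨le_max_of_le_left (by linarith [hc.2]),
      max_le (by linarith [hc.1]) (min_le_of_left_le (by linarith [hc.2]))⟩
  exact ⟨(convex_Icc 0 1).lineMap_mem p.2.1 (petalParam (p : ℝ × ℝ).1).2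
      ⟨le_min (by linarith [s.2.1]) zero_le_one, min_le_right _ _⟩,
    (convex_Icc (-1) 1).lineMap_mem p.2.2 hclamp
      ⟨le_max_right _ _, max_le (by linarith [s.2.2]) zero_le_one⟩⟩

lemma quarter_le_abs_flatten {s : unitInterval} {p : Sq} (hp : p ∈ qm ⁻¹' Xset)
    (hy : 1 / 4 ≤ |(p : ℝ × ℝ).2|) (hc : height (petalParam (p : ℝ × ℝ).1) = 1 / 4) :
    1 / 4 ≤ |(flatten s p).2| := by
  have hs : max (2 * (s : ℝ) - 1) 0 ∈ Icc (0 : ℝ) 1 :=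
    ⟨le_max_right _ _, max_le (by linarith [s.2.2]) zero_le_one⟩
  rcases le_total 0 (p : ℝ × ℝ).2 with h | h
  · rw [abs_of_nonneg h] at hy
    refine le_abs.mpr (.inl ((convex_Ici (1 / 4 : ℝ)).lineMap_mem hy ?_ hs))
    rw [clampHeight_of_nonneg hp h, hc, mem_Ici]
  · rw [abs_of_nonpos h] at hy
    refine le_abs.mpr (.inr (le_neg.mpr ?_))
    refine (convex_Iic (-(1 / 4) : ℝ)).lineMap_mem (le_neg.mpr hy) ?_ hs
    rw [clampHeight_of_nonpos hp h, hc, mem_Iic]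

lemma flatten_mem (s : unitInterval) {p : Sq} (hp : p ∈ qm ⁻¹' Xset) :
    ⟨flatten s p, flatten_mem_Sq s p⟩ ∈ qm ⁻¹' Xset := by
  have hs : min (2 * (s : ℝ)) 1 ∈ Icc (0 : ℝ) 1 :=
    ⟨le_min (by linarith [s.2.1]) zero_le_one, min_le_right _ _⟩
  rw [mem_preimage_Xset_iff]
  rcases (mem_preimage_Xset_iff p).mp hp with h | h | h
  · refine .inl ((convex_Iic (1 / 4 : ℝ)).lineMap_mem h ?_ hs)
    norm_num [petalParam_of_le h]
  · refine .inr (.inl ((convex_Ici (3 / 4 : ℝ)).lineMap_mem h ?_ hs))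
    norm_num [petalParam_of_ge h]
  · rcases le_total (2 * (s : ℝ)) 1 with h2 | h2
    · have hsnd : (flatten s p).2 = (p : ℝ × ℝ).2 := by simp [flatten, h2]
      exact .inr (.inr (h.trans_eq (congrArg _ hsnd.symm)))
    · have hfst : (flatten s p).1 = petalParam (p : ℝ × ℝ).1 := by simp [flatten, h2]
      by_cases hc : height (petalParam (p : ℝ × ℝ).1) = 1 / 4
      · exact .inr (.inr (quarter_le_abs_flatten hp h hc))
      · rw [hfst]
        grind [height]

lemma clampHeight_of_height_eq_zero {p : ℝ × ℝ} (h : height (petalParam p.1) = 0) :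
    clampHeight p = 0 := by
  simp [clampHeight, h]

lemma petalParam_leftSide (v : Icc (-1 : ℝ) 1) : petalParam (leftSide v : ℝ × ℝ).1 = 0 :=
  petalParam_of_le (by norm_num [leftSide])

lemma petalParam_rightSide (v : Icc (-1 : ℝ) 1) : petalParam (rightSide v : ℝ × ℝ).1 = 1 :=
  petalParam_of_ge (by norm_num [rightSide])

lemma rel_flatten_sides (s : unitInterval) (v : Icc (-1 : ℝ) 1) :
    rel ⟨flatten s (leftSide v), flatten_mem_Sq s _⟩
      ⟨flatten s (rightSide v), flatten_mem_Sq s _⟩ := by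
  have hl := petalParam_leftSide v
  have hr := petalParam_rightSide v
  have hcl := clampHeight_of_height_eq_zero (p := leftSide v) (by simp [hl])
  have hcr := clampHeight_of_height_eq_zero (p := rightSide v) (by simp [hr])
  refine .inr (.inl ⟨?_, ?_, ?_⟩) <;> simp only [flatten, hl, hr, hcl, hcr] <;>
    simp [leftSide, rightSide, AffineMap.lineMap_apply]
  ring

lemma abs_signed_height (upper : Bool) (h : unitInterval) :
    |(bif upper then 1 else -1) * height h| = height h := by
  cases upper <;> simp [abs_of_nonneg (height_mem_Icc h).1]

/-- The loops of the figure eight that pass above and below the removed disc. -/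
noncomputable def loop (upper : Bool) : C(unitInterval, X) where
  toFun h := qX ⟨⟨(h, (bif upper then 1 else -1) * height h), graph_mem_Sq h
    (abs_signed_height upper h)⟩, graph_mem h (abs_signed_height upper h)⟩

lemma loop_zero (i : Bool) :
    loop i 0 = qX ⟨leftSide ⟨0, by simp⟩, leftSide_mem _⟩ := by
  simp [loop, leftSide]

lemma loop_one (i : Bool) :
    loop i 1 = qX ⟨leftSide ⟨0, by simp⟩, leftSide_mem _⟩ := by
  rw [← qX_rightSide]
  simp [loop, rightSide]

lemma exists_retraction :
    ∃ r : C(X, Rose Bool), ∀ p, r (qX p) =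
      Rose.petal (decide (0 ≤ (p : ℝ × ℝ).2)) (petalParam (p : ℝ × ℝ).1) := by
  obtain ⟨r, hr_nonneg, hr_nonpos⟩ := exists_continuousMap_of_isClosed_cover
    (s := {p : qm ⁻¹' Xset | 0 ≤ (p : ℝ × ℝ).2}) (t := {p : qm ⁻¹' Xset | (p : ℝ × ℝ).2 ≤ 0})
    (isClosed_le (by fun_prop) (by fun_prop)) (isClosed_le (by fun_prop) (by fun_prop))
    (eq_univ_of_forall fun p => le_total 0 (p : ℝ × ℝ).2)
    ⟨fun p => Rose.petal true (petalParam (p : ℝ × ℝ).1),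
      (Rose.continuous_petal true).comp (by fun_prop)⟩
    ⟨fun p => Rose.petal false (petalParam (p : ℝ × ℝ).1),
      (Rose.continuous_petal false).comp (by fun_prop)⟩
    (fun p hp hp' => by
      have hy : (p : ℝ × ℝ).2 = 0 := le_antisymm hp' hp
      rcases (mem_preimage_Xset_iff p).mp p.2 with h | h | h
      · simp [petalParam_of_le h, Rose.petal_zero_eq_petal_one _ true]
      · simp [petalParam_of_ge h, ← Rose.petal_zero_eq_petal_one true]
      · norm_num [hy] at h)
  have hr (p : qm ⁻¹' Xset) :
      r p = Rose.petal (decide (0 ≤ (p : ℝ × ℝ).2)) (petalParam (p : ℝ × ℝ).1) := by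
    by_cases h : 0 ≤ (p : ℝ × ℝ).2
    · simp [hr_nonneg ⟨p, h⟩, h]
    · simp [hr_nonpos ⟨p, le_of_not_ge h⟩, h]
  obtain ⟨k, hk⟩ := exists_lift_qX (Y := Unit) (r.comp .fst) fun v _ => by
    simp only [ContinuousMap.comp_apply, ContinuousMap.fst_apply, hr, petalParam_leftSide,
      petalParam_rightSide]
    exact Rose.petal_zero_eq_petal_one _ _
  exact ⟨k.comp ((ContinuousMap.id X).prodMk (.const X ())), fun p => (hk p ()).trans (hr p)⟩

lemma exists_homotopic_id_through_rose :
    ∃ (r : C(X, Rose Bool)) (k : C(Rose Bool, X)), (k.comp r).Homotopic (.id X) := by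
  obtain ⟨r, hr⟩ := exists_retraction
  obtain ⟨k, hk⟩ := Rose.exists_continuousMap_of_loops loop _ loop_zero loop_one
  obtain ⟨H, hH⟩ := exists_lift_qX (Z := X) (Y := unitInterval)
    ⟨fun z => qX ⟨⟨flatten z.2 z.1, flatten_mem_Sq z.2 z.1⟩, flatten_mem z.2 z.1.2⟩, by fun_prop⟩
    fun v s => Subtype.ext (Quot.sound (rel_flatten_sides s v))
  refine ⟨r, k, .symm ⟨⟨⟨fun z => H (z.2, z.1), by fun_prop⟩, fun x => ?_, fun x => ?_⟩⟩⟩ <;>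
    obtain ⟨p, rfl⟩ := isQuotientMap_qX.surjective x
  · simp [hH, flatten_zero]
  · simp only [ContinuousMap.coe_mk, hH, Icc.coe_one, flatten_one, ContinuousMap.comp_apply, hr,
      hk, loop]
    congr 3
    rcases le_or_gt 0 (p : ℝ × ℝ).2 with h | h
    · simp [h, clampHeight_of_nonneg p.2 h]
    · simp [h.not_ge, clampHeight_of_nonpos p.2 h.le]

end RetractionOntoRose

section CollarConstantMaps

variable {Z : Type*} [TopologicalSpace Z]

lemma CollarConstant.comp_left {Z' : Type*} [TopologicalSpace Z'] {f : C(X, Z)}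
    (hf : CollarConstant f) (g : C(Z, Z')) : CollarConstant (g.comp f) := by
  obtain ⟨⟨c, hc⟩, c', hc'⟩ := hf
  exact ⟨⟨g c, fun x hx => congrArg g (hc x hx)⟩, g c', fun x hx => congrArg g (hc' x hx)⟩

lemma CollarConstant.homotopicWith_comp {Z' : Type*} [TopologicalSpace Z'] {f : C(X, Z)}
    (hf : CollarConstant f) {g g' : C(Z, Z')} (h : g.Homotopic g') :
    (g.comp f).HomotopicWith (g'.comp f) CollarConstant := by
  obtain ⟨H⟩ := h
  exact ⟨⟨H.comp (.refl f), fun t => hf.comp_left (H.curry t)⟩⟩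

lemma exists_extension_of_const_near_C2 {f : C(X, Z)} {c : Z}
    (hc : ∀ x : X, radius x ≤ 5 / 16 → f x = c) :
    ∃ F : C(M, Z), (∀ x : X, F x = f x) ∧ ∀ m, radius m ≤ 5 / 16 → F m = c := by
  obtain ⟨F, hF, hF_disc⟩ := exists_continuousMap_of_isClosed_cover (s := Xset)
    (t := {m | radius m ≤ 1 / 4}) isClosed_Xset (isClosed_le (by fun_prop) continuous_const)
    (eq_univ_of_forall fun m => (le_total _ _).imp_left (mem_Xset_iff m).mpr) f (.const _ c)
    fun m hm hm' => hc ⟨m, hm⟩ (le_trans hm' (by norm_num))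
  refine ⟨F, hF, fun m hm => ?_⟩
  by_cases hX : m ∈ Xset
  · exact (hF ⟨m, hX⟩).trans (hc ⟨m, hX⟩ hm)
  · exact hF_disc ⟨m, (not_le.mp (hX ∘ (mem_Xset_iff m).mpr)).le⟩

lemma seven_eighths_le_rad_iff (p : Sq) :
    7 / 8 ≤ rad p ↔ 7 / 8 ≤ (p : ℝ × ℝ).2 ∨ (p : ℝ × ℝ).2 ≤ -(7 / 8) := by
  obtain ⟨⟨x, y⟩, hx, hy⟩ := p
  have hx' : |x - 1 / 2| ≤ 1 / 2 := abs_le.mpr ⟨by linarith [hx.1], by linarith [hx.2]⟩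
  rw [rad_mk, le_max_iff, le_abs (b := y), le_neg]
  exact or_iff_right (by linarith)

lemma CollarConstant.exists_lift {E B G : Type*} [TopologicalSpace E] [TopologicalSpace B]
    [Group G] [MulAction G E] {p : E → B} (hp : IsQuotientCoveringMap p G)
    (hG : ∀ g : G, g * g = 1 → g = 1) {f : C(X, B)} (hf : CollarConstant f) :
    ∃ Φ : C(X, E), CollarConstant Φ ∧ ∀ x, p (Φ x) = f x := by
  obtain ⟨⟨c₁, hc₁⟩, c₂, hc₂⟩ := hf
  obtain ⟨F, hF, hF_inner⟩ := exists_extension_of_const_near_C2 hc₂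
  have hF_outer (m) (hm : 7 / 8 ≤ radius m) : F m = c₁ :=
    (hF ⟨m, (mem_Xset_iff m).mpr (by linarith)⟩).trans (hc₁ _ hm)
  obtain ⟨Φ, hΦ⟩ := exists_lift_of_const_on_boundary hp hG F
    fun q hq => hF_outer (qm q) (by rw [radius_qm, (rad_eq_one_iff q).mpr hq]; norm_num)
  let Ψ : C(Sq, E) := Φ.comp ⟨qm, isQuotientMap_qm.continuous⟩
  have hΨ_outer (s : Set ℝ) (hs : Convex ℝ s) (hsub : s ⊆ {y | 7 / 8 ≤ y ∨ y ≤ -(7 / 8)})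
      (q q' : Sq) (hq : (q : ℝ × ℝ).2 ∈ s) (hq' : (q' : ℝ × ℝ).2 ∈ s) : Ψ q = Ψ q' :=
    lift_eq_of_convex hp.isCoveringMap (hs.linear_preimage (.snd ℝ ℝ ℝ)) (b := c₁)
      (fun a ha => (hΦ _).trans (hF_outer _ ((seven_eighths_le_rad_iff a).mpr (hsub ha)))) hq hq'
  have hΨ_inner (q q' : Sq) (hq : rad q ≤ 5 / 16) (hq' : rad q' ≤ 5 / 16) : Ψ q = Ψ q' :=
    lift_eq_of_convex hp.isCoveringMap (convex_closedBall _ _) (b := c₂)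
      (fun a ha => (hΦ _).trans (hF_inner _ ha)) hq hq'
  let y₁ : Icc (-1 : ℝ) 1 := ⟨1, by norm_num⟩
  refine ⟨Φ.comp ⟨_, continuous_subtype_val⟩, ⟨⟨Ψ (leftSide y₁), fun x hx => ?_⟩,
    ⟨Ψ ⟨(1 / 2, 0), by norm_num [Sq]⟩, fun x hx => ?_⟩⟩, fun x => (hΦ x).trans (hF x)⟩ <;>
    obtain ⟨q, rfl⟩ := isQuotientMap_qX.surjective x
  · rcases (seven_eighths_le_rad_iff q).mp hx with h | h
    · exact hΨ_outer (Ici (7 / 8)) (convex_Ici _) (fun _ => .inl) q _ h (by norm_num [leftSide, y₁])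
    · rw [show Ψ (leftSide y₁) = Ψ (rightSide y₁) from congrArg Φ (qm_rightSide y₁).symm]
      exact hΨ_outer (Iic (-(7 / 8))) (convex_Iic _) (fun _ => .inr) q _ h
        (by norm_num [rightSide, y₁])
  · exact hΨ_inner q _ hx (by norm_num [rad_mk])

lemma CollarConstant.homotopicWith_const {f : C(X, X)} (hf : CollarConstant f) :
    ∃ o, f.HomotopicWith (.const X o) CollarConstant := by
  obtain ⟨r, k, hkr⟩ := exists_homotopic_id_through_rose
  have hcov := Rose.isQuotientCoveringMap_proj Bool
  obtain ⟨Φ, hΦ, hproj⟩ := (hf.comp_left r).exists_lift hcov fun g hg =>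
    (pow_eq_one_iff_left two_ne_zero).mp ((sq g).trans hg)
  let q : C(CayleyTree Bool, X) := k.comp ⟨Rose.proj Bool, hcov.continuous⟩
  have hfactor : (k.comp r).comp f = q.comp Φ :=
    ContinuousMap.ext fun x => congrArg k (hproj x).symm
  obtain ⟨o, ho⟩ : q.Nullhomotopic := (id_nullhomotopic (CayleyTree Bool)).comp_right q
  have hf_factor : f.HomotopicWith (q.comp Φ) CollarConstant :=
    hfactor ▸ hf.homotopicWith_comp hkr.symm
  exact ⟨o, hf_factor.trans (hΦ.homotopicWith_comp ho)⟩

end CollarConstantMaps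

section FinalDeformation

/-- The vertical segment from the inner to the outer boundary circle, parametrized by the radius
and extended to the real line by constants. -/
noncomputable def ray : C(ℝ, X) where
  toFun t := qX ⟨⟨(1 / 2, max (1 / 4) (min t 1)), ⟨by norm_num, by norm_num⟩,
    le_max_of_le_left (by norm_num), max_le (by norm_num) (min_le_right _ _)⟩,
    (mem_preimage_Xset_iff _).mpr (.inr (.inr (le_abs.mpr (.inl (le_max_left _ _)))))⟩

lemma radius_ray {t : ℝ} (ht : t ∈ Icc (1 / 4) 1) : radius (ray t) = t := by
  change rad (1 / 2, max (1 / 4) (min t 1)) = t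
  rw [rad_mk, min_eq_left ht.2, max_eq_right ht.1, sub_self, abs_zero,
    max_eq_right (abs_nonneg t), abs_of_nonneg (by linarith [ht.1])]

lemma CollarConstant.exists_factor_through_radius {f : C(X, X)} (hf : CollarConstant f)
    (hBd : BoundaryPreserving f) :
    ∃ γ : C(ℝ, X), BoundaryHomotopic f (γ.comp (radius.restrict Xset)) := by
  obtain ⟨o, ⟨K⟩⟩ := hf.homotopicWith_const
  let δ (t : ℝ) : unitInterval := projIcc 0 1 zero_le_one (min (16 * t - 4) (8 - 8 * t))
  have hδ : Continuous δ := by fun_prop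
  let F : C(unitInterval × X, X) := ⟨fun z => K (z.1 * δ (radius z.2), z.2), by fun_prop⟩
  have hF_radial (x : X) : F (1, x) = F (1, ray (radius x)) := by
    have hray := radius_ray (radius_mem_Icc x)
    obtain ⟨⟨c, hc⟩, c', hc'⟩ := K.prop (δ (radius x))
    simp only [F, ContinuousMap.coe_mk, one_mul, hray]
    rcases le_total (7 / 8) (radius x : ℝ) with h₁ | h₁
    · exact (hc x h₁).trans (hc _ (hray.symm ▸ h₁)).symm
    rcases le_total (radius x : ℝ) (5 / 16) with h₂ | h₂
    · exact (hc' x h₂).trans (hc' _ (hray.symm ▸ h₂)).symm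
    · have hδ_one : δ (radius x) = 1 :=
        projIcc_of_right_le _ (le_min (by linarith) (by linarith))
      rw [hδ_one, K.apply_one, K.apply_one]
      rfl
  refine ⟨F.comp ((ContinuousMap.const ℝ 1).prodMk ray), ⟨⟨F, fun x => ?_, hF_radial⟩,
    fun x hx t => ?_⟩⟩
  · simp [F]
  · have hδ_zero : δ (radius x) = 0 := projIcc_of_le_left _ <| by
      rcases (mem_Bd_iff x).mp hx with h | h <;> norm_num [h]
    change K (t * δ (radius x), x) ∈ Bd
    rw [hδ_zero, mul_zero, K.apply_zero]
    exact hBd hx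

lemma exists_raise : ∃ P : C(X × ℝ, X),
    (∀ (x : X) (m : ℝ), m ≤ 1 / 2 → radius (P (x, m)) = max (radius x) m) ∧
      ∀ (x : X) (m : ℝ), m ≤ radius x → P (x, m) = x := by
  obtain ⟨P, hP, hP_eq⟩ := exists_radial_flow (Y := ℝ)
    ⟨fun z => max (radius z.1) (min z.2 (1 / 2)), by fun_prop⟩
    (fun z => ⟨le_max_of_le_left (radius_mem_Icc z.1).1,
      max_le (radius_mem_Icc z.1).2 (min_le_of_right_le (by norm_num))⟩)
    (fun x m hx => max_le hx (min_le_right _ _)) fun x m hx => le_max_of_le_left hx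
  refine ⟨P, fun x m hm => ?_, fun x m hm => hP_eq x m (max_eq_left (min_le_of_left_le hm))⟩
  rw [hP, ContinuousMap.coe_mk, min_eq_left hm]

lemma BoundaryPreserving.path_mem_Bd {γ : C(ℝ, X)}
    (hγ : BoundaryPreserving (γ.comp (radius.restrict Xset))) {t : ℝ} (ht : t = 1 ∨ t = 1 / 4) :
    γ t ∈ Bd := by
  have hray : radius (ray t) = t := radius_ray (by rcases ht with rfl | rfl <;> norm_num)
  simpa [hray] using hγ ((mem_Bd_iff (ray t)).mpr (by rwa [hray]))

lemma BoundaryPreserving.exists_raised_path {γ : C(ℝ, X)}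
    (hγ : BoundaryPreserving (γ.comp (radius.restrict Xset))) :
    ∃ γ' : C(ℝ, X),
      BoundaryHomotopic (γ.comp (radius.restrict Xset)) (γ'.comp (radius.restrict Xset)) ∧
        ∀ t, radius (γ' t) =
          max (radius (γ (min 1 (6 * t - 5 / 4)))) (min (2 * t - 1 / 4) (7 / 8 - t)) := by
  obtain ⟨P, hP_radius, hP_eq⟩ := exists_raise
  let σ (t : ℝ) : ℝ := min 1 (6 * t - 5 / 4)
  let m (t : ℝ) : ℝ := min (2 * t - 1 / 4) (7 / 8 - t)
  let H (s t : ℝ) : X := P (γ (AffineMap.lineMap t (σ t) s), s * m t)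
  have hH : Continuous fun z : ℝ × ℝ => H z.1 z.2 := by fun_prop
  have hH_zero (t : ℝ) : H 0 t = γ t := by
    have hpos := (radius_mem_Icc (γ t)).1
    simp only [H, AffineMap.lineMap_apply_zero, zero_mul]
    exact hP_eq _ _ (by linarith)
  have hH_boundary {t : ℝ} (ht : t = 1 ∨ t = 1 / 4) (s : unitInterval) : H s t = γ t := by
    have hσ : σ t = t := by rcases ht with rfl | rfl <;> norm_num [σ]
    have hm : s * m t ≤ 1 / 4 := by
      rcases ht with rfl | rfl <;> norm_num [m] <;> linarith [s.2.1, s.2.2]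
    simp only [H, hσ, AffineMap.lineMap_same_apply]
    exact hP_eq _ _ (hm.trans (radius_mem_Icc (γ t)).1)
  refine ⟨⟨H 1, by fun_prop⟩, ⟨⟨⟨fun z => H z.1 (radius z.2), by fun_prop⟩,
    fun x => hH_zero (radius x), fun x => rfl⟩, fun x hx s => ?_⟩, fun t => ?_⟩
  · have hx' := (mem_Bd_iff x).mp hx
    exact mem_of_eq_of_mem (hH_boundary hx' s) (hγ.path_mem_Bd hx')
  · have hm : m t ≤ 1 / 2 := by grind
    simpa [H, -one_div] using hP_radius (γ (σ t)) (m t) hm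

lemma BoundaryPreserving.exists_fixedPoints_subset_pair {γ : C(ℝ, X)}
    (hγ : BoundaryPreserving (γ.comp (radius.restrict Xset))) :
    ∃ g, BoundaryHomotopic (γ.comp (radius.restrict Xset)) g ∧
      ∃ a b, {x | g x = x} ⊆ {a, b} := by
  obtain ⟨γ', hγγ', hγ'⟩ := hγ.exists_raised_path
  have hfixed {x : X} (hx : γ' (radius x) = x) :
      radius x = 1 / 4 ∨ radius x = if radius (γ 1) = 1 then 1 else 7 / 16 := by
    have hx_radius := hγ' (radius x)
    rw [hx] at hx_radius
    rcases le_total (radius x : ℝ) (3 / 8) with h | h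
    · left
      linarith [(radius_mem_Icc x).1, (le_max_right _ _).trans_eq hx_radius.symm,
        min_eq_left (show 2 * radius x - 1 / 4 ≤ 7 / 8 - (radius x : ℝ) by linarith)]
    · have hγ_one := (mem_Bd_iff _).mp (hγ.path_mem_Bd (.inl rfl))
      rw [min_eq_left (by linarith), min_eq_right (by linarith)] at hx_radius
      grind
  exact ⟨_, hγγ', γ' (1 / 4), γ' (if radius (γ 1) = 1 then 1 else 7 / 16), fun x hx =>
    (hfixed hx).imp (fun h => hx.symm.trans (congrArg γ' h)) fun h => hx.symm.trans (congrArg γ' h)⟩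

end FinalDeformation

/-- A boundary-inessential boundary-preserving map of the punctured Möbius band is
boundary-homotopic to a map with at most two fixed points. -/
theorem stmt_3 (f : C(X, X)) (hf : BoundaryPreserving f)
    (h1 : Inessential (restrictMap f (hf.mono_left Set.subset_union_left : MapsTo f C1 Bd)))
    (h2 : Inessential (restrictMap f (hf.mono_left Set.subset_union_right : MapsTo f C2 Bd))) :
    ∃ g : C(X, X), BoundaryHomotopic f g ∧ ∃ a b : X, {x : X | g x = x} ⊆ {a, b} := by
  obtain ⟨f₁, hff₁, hf₁⟩ := exists_collarConstant hf h1 h2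
  obtain ⟨γ, hf₁γ⟩ := hf₁.exists_factor_through_radius hff₁.boundaryPreserving_right
  obtain ⟨g, hγg, hg⟩ := hf₁γ.boundaryPreserving_right.exists_fixedPoints_subset_pair
  exact ⟨g, hff₁.trans (hf₁γ.trans hγg), hg⟩

end PMB
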